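/- arXiv:0906.0887 — 2 statements merged into one kernel-verified Lean document; each statement's English description precedes it below -/
import Mathlib

section
/- Let ∑_{i=1}^k αᵢ sᵢ ≥ 1 with α ∈ ℝ^k, α ≥ 0, be a facet-defining inequality for conv(P([r¹,…,r^k],f)) such that L_α is not contained in any split set. Suppose the cone generated by {r¹,…,r^k} is two-dimensional but is not all of ℝ². Then there exist a column r^{k+1} ∈ ℚ² and a coefficient α_{k+1} > 0 such that: (i) the cone generated by {r¹,…,r^k,r^{k+1}} equals ℝ²; (ii) ∑_{i=1}^{k+1} αᵢ sᵢ ≥ 1 is a facet-defining inequality for conv(P([r¹,…,r^k,r^{k+1}],f)); and (iii) the induced lattice-free set of ∑_{i=1}^{k+1} αᵢ sᵢ ≥ 1, namely conv{f + rⁱ/αᵢ : 1 ≤ i ≤ k+1} (all αᵢ being positive), is not a triangle of type T¹. -/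
open Set Pointwise

abbrev Pt : Type := Fin 2 → ℝ

def IsIntPt (x : Pt) : Prop := ∀ j, ∃ z : ℤ, x j = (z : ℝ)

def IsRatPt (x : Pt) : Prop := ∀ j, ∃ q : ℚ, x j = (q : ℝ)

/-- The mixed-integer set `P(R,f)`. -/
def mixedP (k : ℕ) (r : Fin k → Pt) (f : Pt) : Set (Pt × (Fin k → ℝ)) :=
  {p | IsIntPt p.1 ∧ (∀ i, 0 ≤ p.2 i) ∧ p.1 = f + ∑ i, p.2 i • r i}

/-- The linear relaxation `P(R,f)⁰`. -/
def relaxP (k : ℕ) (r : Fin k → Pt) (f : Pt) : Set (Pt × (Fin k → ℝ)) :=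
  {p | (∀ i, 0 ≤ p.2 i) ∧ p.1 = f + ∑ i, p.2 i • r i}

/-- The convex cone generated by a set (all nonnegative combinations). -/
def coneGen (S : Set Pt) : Set Pt :=
  {x | ∃ (n : ℕ) (c : Fin n → ℝ) (v : Fin n → Pt),
    (∀ j, 0 ≤ c j) ∧ (∀ j, v j ∈ S) ∧ x = ∑ j, c j • v j}

/-- The induced lattice-free set `L_α`. -/
def inducedSet (k : ℕ) (r : Fin k → Pt) (f : Pt) (α : Fin k → ℝ) : Set Pt :=
  convexHull ℝ ({f} ∪ {x | ∃ i, 0 < α i ∧ x = f + (α i)⁻¹ • r i}) +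
    coneGen {x | ∃ i, α i = 0 ∧ x = r i}

def LatticeFree (S : Set Pt) : Prop := ∀ x ∈ interior S, ¬ IsIntPt x

/-- Validity of `∑ αᵢ sᵢ ≥ γ` for `conv(P(R,f))`. -/
def ValidIneq (k : ℕ) (r : Fin k → Pt) (f : Pt) (α : Fin k → ℝ) (γ : ℝ) : Prop :=
  ∀ p ∈ mixedP k r f, γ ≤ ∑ i, α i * p.2 i

noncomputable def affDim {V : Type*} [AddCommGroup V] [Module ℝ V] (S : Set V) : ℕ :=
  Module.finrank ℝ (affineSpan ℝ S).direction

/-- Facet-defining inequality: valid and its face of the closed convex hull has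
affine dimension exactly one less. -/
def IsFacet (k : ℕ) (r : Fin k → Pt) (f : Pt) (α : Fin k → ℝ) (γ : ℝ) : Prop :=
  ValidIneq k r f α γ ∧
  affDim {p ∈ closure (convexHull ℝ (mixedP k r f)) | ∑ i, α i * p.2 i = γ} + 1 =
    affDim (convexHull ℝ (mixedP k r f))

def splitClosure (k : ℕ) (C : Set (Pt × (Fin k → ℝ))) : Set (Pt × (Fin k → ℝ)) :=
  ⋂ (π : Fin 2 → ℤ) (π₀ : ℤ),
    convexHull ℝ ((C ∩ {p | ∑ j, (π j : ℝ) * p.1 j ≤ (π₀ : ℝ)}) ∪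
      (C ∩ {p | (π₀ : ℝ) + 1 ≤ ∑ j, (π j : ℝ) * p.1 j}))

def closures (k : ℕ) (r : Fin k → Pt) (f : Pt) : ℕ → Set (Pt × (Fin k → ℝ))
  | 0 => relaxP k r f
  | n + 1 => splitClosure k (closures k r f n)

/-- The split rank of `∑ αᵢ sᵢ ≥ γ` w.r.t. `P(R,f)⁰`: least `j` such that the
inequality is valid on the `j`-th split closure, `⊤` if none exists. -/
noncomputable def splitRank (k : ℕ) (r : Fin k → Pt) (f : Pt) (α : Fin k → ℝ) (γ : ℝ) : ℕ∞ :=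
  sInf {j : ℕ∞ | ∃ n : ℕ, j = (n : ℕ∞) ∧ ∀ p ∈ closures k r f n, γ ≤ ∑ i, α i * p.2 i}

def IsSplitSet (S : Set Pt) : Prop :=
  ∃ (π : Fin 2 → ℤ) (π₀ : ℤ), π ≠ 0 ∧
    S = {x : Pt | (π₀ : ℝ) ≤ ∑ j, (π j : ℝ) * x j ∧ ∑ j, (π j : ℝ) * x j ≤ (π₀ : ℝ) + 1}

/-- Triangle of type `T¹`. -/
def IsT1 (S : Set Pt) : Prop :=
  ∃ v : Fin 3 → Pt, AffineIndependent ℝ v ∧ (∀ i, IsIntPt (v i)) ∧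
    S = convexHull ℝ (Set.range v) ∧
    ∀ i j, i ≠ j → ∃! z, z ∈ openSegment ℝ (v i) (v j) ∧ IsIntPt z

/-- Triangle of type `T^{2A}`. -/
def IsT2A (S : Set Pt) : Prop :=
  ∃ v0 v1 v2 : Pt, AffineIndependent ℝ ![v0, v1, v2] ∧ ¬ IsIntPt v0 ∧
    S = convexHull ℝ {v0, v1, v2} ∧
    (∃ z1 z2 : Pt, z1 ≠ z2 ∧ IsIntPt z1 ∧ IsIntPt z2 ∧
      z1 ∈ segment ℝ v1 v2 ∧ z2 ∈ segment ℝ v1 v2) ∧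
    (∃! z, z ∈ openSegment ℝ v0 v1 ∧ IsIntPt z) ∧
    (∃! z, z ∈ openSegment ℝ v0 v2 ∧ IsIntPt z)

/-- Triangle of type `T^{2B}`. -/
def IsT2B (S : Set Pt) : Prop :=
  ∃ v0 v1 v2 : Pt, AffineIndependent ℝ ![v0, v1, v2] ∧ ¬ IsIntPt v0 ∧
    S = convexHull ℝ {v0, v1, v2} ∧
    (∃ z1 z2 : Pt, z1 ≠ z2 ∧ IsIntPt z1 ∧ IsIntPt z2 ∧
      z1 ∈ segment ℝ v1 v2 ∧ z2 ∈ segment ℝ v1 v2) ∧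
    (∃! z, z ∈ openSegment ℝ v0 v1 ∧ IsIntPt z) ∧
    (∀ z ∈ openSegment ℝ v0 v2, ¬ IsIntPt z)

/-- Triangle of type `T³`. -/
def IsT3 (S : Set Pt) : Prop :=
  ∃ v0 v1 v2 : Pt, AffineIndependent ℝ ![v0, v1, v2] ∧
    ¬ IsIntPt v0 ∧ ¬ IsIntPt v1 ∧ ¬ IsIntPt v2 ∧
    S = convexHull ℝ {v0, v1, v2} ∧
    (∃! z, z ∈ openSegment ℝ v0 v1 ∧ IsIntPt z) ∧
    (∃! z, z ∈ openSegment ℝ v1 v2 ∧ IsIntPt z) ∧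
    (∃! z, z ∈ openSegment ℝ v0 v2 ∧ IsIntPt z) ∧
    (∀ z, IsIntPt z → z ∈ frontier S →
      z ∈ openSegment ℝ v0 v1 ∨ z ∈ openSegment ℝ v1 v2 ∨ z ∈ openSegment ℝ v0 v2)

/-- A quadrilateral with vertices `v 0, v 1, v 2, v 3` in cyclic order; each `vᵢ`
is an extreme point of the hull and each side lies on the boundary. -/
def IsQuadWith (S : Set Pt) (v : Fin 4 → Pt) : Prop :=
  S = convexHull ℝ (Set.range v) ∧
  (∀ i, v i ∈ Set.extremePoints ℝ S) ∧
  (∀ i : Fin 4, segment ℝ (v i) (v (i + 1)) ⊆ frontier S)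

/-- Quadrilateral of type `Q¹`. -/
def IsQ1 (S : Set Pt) : Prop :=
  ∃ v : Fin 4 → Pt, IsQuadWith S v ∧
    (∃ z1 z2 : Pt, z1 ≠ z2 ∧ IsIntPt z1 ∧ IsIntPt z2 ∧
      z1 ∈ segment ℝ (v 0) (v 1) ∧ z2 ∈ segment ℝ (v 0) (v 1)) ∧
    (∃ j : Fin 4, j ≠ 0 ∧
      (∀ i : Fin 4, i ≠ 0 → i ≠ j → ∃ z, IsIntPt z ∧ z ∈ segment ℝ (v i) (v (i + 1))) ∧
      (∀ z ∈ openSegment ℝ (v j) (v (j + 1)), ¬ IsIntPt z)) ∧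
    (∃ T : Set Pt, (IsT1 T ∨ IsT2A T) ∧ S ⊆ T)

/-- Quadrilateral of type `Q²`. -/
def IsQ2 (S : Set Pt) : Prop :=
  ∃ v : Fin 4 → Pt, IsQuadWith S v ∧ (∀ i, ¬ IsIntPt (v i)) ∧
    ∀ i : Fin 4, ∃! z, z ∈ openSegment ℝ (v i) (v (i + 1)) ∧ IsIntPt z

/-!
The new ray is a primitive integer vector `ρ` in the interior of `-cone (r i)` such that `f` lies on
no lattice line of direction `ρ`; the rays together with `ρ` then generate the plane.

Since `L_α` lies in no split set, some point `f + R s` of cost `< 1` lies on a lattice line of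
direction `ρ`, hence reaches an integer point by a positive multiple of `ρ`. (Applied to directions
parallel to `r i`, this also shows `α i > 0`.) So the coefficient of `ρ` has to be positive, and a
least one giving a valid inequality exists: only basic solutions matter and, as `ρ` is integral,
only the finitely many of them that use `ρ` at most once. The resulting inequality is tight at a
point that uses `ρ`; together with the original facet this point spans a facet.

Finally, `f + a⁻¹ ρ` is an extreme point of the new induced set but is not integral, because it lies
on the line through `f` of direction `ρ`; the extreme points of a `T¹` triangle are integral.
-/

/-! ### Cones -/

lemma coneGen_eq_hull (S : Set Pt) : coneGen S = PointedCone.hull ℝ S := by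
  ext x
  rw [SetLike.mem_coe, PointedCone.hull, Submodule.mem_span_set']
  constructor
  · rintro ⟨n, c, v, hc, hv, rfl⟩
    exact ⟨n, fun j => ⟨c j, hc j⟩, fun j => ⟨v j, hv j⟩, rfl⟩
  · rintro ⟨n, c, v, rfl⟩
    exact ⟨n, fun j => c j, fun j => v j, fun j => (c j).2, fun j => (v j).2, rfl⟩

section OrderedField

variable {𝕜 E ι : Type*} [Field 𝕜] [LinearOrder 𝕜] [IsStrictOrderedRing 𝕜] [AddCommGroup E]
  [Module 𝕜 E]

lemma pointedCone_eq_top_of_repr_neg [Finite ι] (b : Module.Basis ι 𝕜 E) {C : PointedCone 𝕜 E}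
    (hb : ∀ i, b i ∈ C) {w : E} (hw : w ∈ C) (hneg : ∀ i, b.repr w i < 0) : C = ⊤ := by
  cases nonempty_fintype ι
  refine eq_top_iff.2 fun x _ => ?_
  set e := ∑ i, |b.repr x i / b.repr w i|
  have he0 : 0 ≤ e := Finset.sum_nonneg fun i _ => abs_nonneg _
  have hcoord (i : ι) : 0 ≤ b.repr (x - e • w) i := by
    have hle : b.repr x i / b.repr w i ≤ e := (le_abs_self _).trans
      (Finset.single_le_sum (f := fun i => |b.repr x i / b.repr w i|)
        (fun i _ => abs_nonneg _) (Finset.mem_univ i))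
    rw [div_le_iff_of_neg (hneg i)] at hle
    simpa using hle
  have hx : x = ∑ i, b.repr (x - e • w) i • b i + e • w := by
    rw [b.sum_repr, sub_add_cancel]
  rw [hx]
  exact add_mem (sum_mem fun i _ => C.smul_mem (hcoord i) (hb i)) (C.smul_mem he0 hw)

lemma mem_extremePoints_convexHull_insert {S : Set E} {v : E} (hv : v ∉ convexHull 𝕜 S) :
    v ∈ (convexHull 𝕜 (insert v S)).extremePoints 𝕜 := by
  rcases S.eq_empty_or_nonempty with rfl | hS
  · simp
  refine mem_extremePoints_iff_left.2 ⟨subset_convexHull 𝕜 _ (mem_insert v S), ?_⟩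
  rintro x hx y hy ⟨a, b, ha, hb, hab, hxy⟩
  rw [convexHull_insert hS, convexJoin_singleton_left, mem_iUnion₂] at hx hy
  obtain ⟨x', hx', c, c', -, hc', hcc, rfl⟩ := hx
  obtain ⟨y', hy', d, d', -, hd', hdd, rfl⟩ := hy
  by_contra hne
  have hc'0 : c' ≠ 0 := by
    rintro rfl
    rw [add_zero] at hcc
    simp [hcc] at hne
  have hm : 0 < a * c' + b * d' := by positivity
  have hcombo : (a * c') • x' + (b * d') • y' = (a * c' + b * d') • v := by
    obtain rfl : c = 1 - c' := by linear_combination hcc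
    obtain rfl : d = 1 - d' := by linear_combination hdd
    obtain rfl : a = 1 - b := by linear_combination hab
    linear_combination (norm := module) hxy
  refine hv ?_
  have hv' : v = (a * c' / (a * c' + b * d')) • x' + (b * d' / (a * c' + b * d')) • y' := by
    rw [div_eq_inv_mul, div_eq_inv_mul, mul_smul _ (a * c'), mul_smul _ (b * d'), ← smul_add,
      hcombo, inv_smul_smul₀ hm.ne']
  rw [hv']
  exact convex_convexHull 𝕜 S hx' hy' (by positivity) (by positivity) (by field_simp)

end OrderedField

/-! ### Basic solutions of linear systems -/

section Ring

variable {R E ι : Type*} [Ring R] [AddCommGroup E] [Module R E] [Fintype ι]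

lemma linearIndepOn_iff_of_fintype {r : ι → E} {s : Set ι} :
    LinearIndepOn R r s ↔
      ∀ z : ι → R, Function.support z ⊆ s → ∑ i, z i • r i = 0 → z = 0 := by
  rw [linearIndepOn_iff]
  refine (Finsupp.equivFunOnFinite (α := ι) (M := R)).forall_congr fun z => ?_
  simp [Finsupp.mem_supported, Finsupp.linearCombination_apply, Finsupp.sum_fintype, subset_def,
    DFunLike.ext_iff, funext_iff]

/-- A basic solution is determined by its support and its right-hand side. -/
lemma finite_basic_solutions (r : ι → E) {Y : Set E} (hY : Y.Finite) :
    {t : ι → R | LinearIndepOn R r (Function.support t) ∧ ∑ i, t i • r i ∈ Y}.Finite := by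
  refine Set.Finite.of_finite_image
    (f := fun t : ι → R => (Function.support t, ∑ i, t i • r i))
    ((finite_univ.prod hY).subset ?_) ?_
  · rintro _ ⟨t, ht, rfl⟩
    exact ⟨mem_univ _, ht.2⟩
  · rintro t ⟨hind, -⟩ t' - heq
    obtain ⟨hsupp, hsum⟩ := Prod.mk.inj heq
    rw [linearIndepOn_iff_of_fintype] at hind
    refine sub_eq_zero.1 (hind (t - t') ?_ ?_)
    · exact (Function.support_sub t t').trans (by simp [← hsupp])
    · simp [sub_smul, Finset.sum_sub_distrib, hsum]

end Ring

section OrderedField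

variable {𝕜 E ι : Type*} [Field 𝕜] [LinearOrder 𝕜] [IsStrictOrderedRing 𝕜] [AddCommGroup E]
  [Module 𝕜 E] [Fintype ι]

/-- Move along a linear dependency, in a direction that does not increase the cost, until some
coordinate vanishes. -/
lemma exists_support_ssubset_of_not_linearIndepOn {r : ι → E} {α t : ι → 𝕜} (hα : ∀ i, 0 ≤ α i)
    (ht : ∀ i, 0 ≤ t i) (hdep : ¬ LinearIndepOn 𝕜 r (Function.support t)) :
    ∃ t' : ι → 𝕜, (∀ i, 0 ≤ t' i) ∧ ∑ i, t' i • r i = ∑ i, t i • r i ∧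
      ∑ i, α i * t' i ≤ ∑ i, α i * t i ∧ Function.support t' ⊂ Function.support t := by
  rw [linearIndepOn_iff_of_fintype] at hdep
  push Not at hdep
  obtain ⟨z, hzt, hz, hz0⟩ := hdep
  wlog hpos : 0 ≤ ∑ i, α i * z i ∧ ∃ i, 0 < z i generalizing z
  · refine this (-z) (by simpa using hzt) (by simpa using hz) (by simpa using hz0) ?_
    simp only [Pi.neg_apply, mul_neg, Finset.sum_neg_distrib, neg_nonneg, neg_pos]
    rcases lt_or_ge (∑ i, α i * z i) 0 with hlt | hge
    · refine ⟨hlt.le, ?_⟩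
      by_contra! hz_nonneg
      exact hlt.not_ge (Finset.sum_nonneg fun i _ => mul_nonneg (hα i) (hz_nonneg i))
    · have hz_nonpos (i : ι) : z i ≤ 0 := not_lt.1 fun hi => hpos ⟨hge, i, hi⟩
      obtain ⟨i, hi⟩ := Function.ne_iff.1 hz0
      exact ⟨Finset.sum_nonpos fun i _ => mul_nonpos_of_nonneg_of_nonpos (hα i) (hz_nonpos i),
        i, (hz_nonpos i).lt_of_ne hi⟩
  obtain ⟨hcost, i₀, hi₀⟩ := hpos
  obtain ⟨j, hj, hmin⟩ := Finset.exists_min_image (Finset.univ.filter fun i => 0 < z i)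
    (fun i => t i / z i) ⟨i₀, by simpa using hi₀⟩
  simp only [Finset.mem_filter, Finset.mem_univ, true_and] at hj hmin
  set θ := t j / z j with hθ
  have hθ0 : 0 ≤ θ := div_nonneg (ht j) hj.le
  refine ⟨fun i => t i - θ * z i, fun i => ?_, ?_, ?_, ?_⟩
  · rcases lt_or_ge 0 (z i) with hi | hi
    · simpa using (le_div_iff₀ hi).1 (hmin i hi)
    · have := mul_nonpos_of_nonneg_of_nonpos hθ0 hi
      linarith [ht i]
  · simp [sub_smul, mul_smul, Finset.sum_sub_distrib, ← Finset.smul_sum, hz]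
  · simp only [mul_sub, Finset.sum_sub_distrib, mul_left_comm _ θ, ← Finset.mul_sum]
    linarith [mul_nonneg hθ0 hcost]
  · refine (ssubset_iff_of_subset fun i => mt fun hti => ?_).2
      ⟨j, hzt hj.ne', Function.notMem_support.2 (by rw [hθ, div_mul_cancel₀ _ hj.ne', sub_self])⟩
    have hzi : z i = 0 := by_contra fun h => hzt h hti
    simp [hti, hzi]

theorem exists_basic_solution {r : ι → E} {α t : ι → 𝕜} (hα : ∀ i, 0 ≤ α i) (ht : ∀ i, 0 ≤ t i) :
    ∃ t' : ι → 𝕜, (∀ i, 0 ≤ t' i) ∧ ∑ i, t' i • r i = ∑ i, t i • r i ∧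
      ∑ i, α i * t' i ≤ ∑ i, α i * t i ∧ LinearIndepOn 𝕜 r (Function.support t') := by
  induction hS : Function.support t using WellFoundedLT.induction generalizing t with
  | ind S ih =>
    subst hS
    by_cases hind : LinearIndepOn 𝕜 r (Function.support t)
    · exact ⟨t, ht, rfl, le_rfl, hind⟩
    obtain ⟨t₁, ht₁, hsum₁, hcost₁, hlt⟩ :=
      exists_support_ssubset_of_not_linearIndepOn hα ht hind
    obtain ⟨t₂, ht₂, hsum₂, hcost₂, hind₂⟩ := ih _ hlt ht₁ rfl
    exact ⟨t₂, ht₂, hsum₂.trans hsum₁, hcost₂.trans hcost₁, hind₂⟩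

end OrderedField

/-! ### Integer points and primitive vectors -/

lemma isIntPt_iff_mem_span {x : Pt} :
    IsIntPt x ↔ x ∈ Submodule.span ℤ (range (Pi.basisFun ℝ (Fin 2))) := by
  simp [Module.Basis.mem_span_iff_repr_mem, IsIntPt, eq_comm]

lemma IsIntPt.add {x y : Pt} (hx : IsIntPt x) (hy : IsIntPt y) : IsIntPt (x + y) :=
  isIntPt_iff_mem_span.2 (add_mem (isIntPt_iff_mem_span.1 hx) (isIntPt_iff_mem_span.1 hy))

lemma IsIntPt.intCast_smul {x : Pt} (hx : IsIntPt x) (n : ℤ) : IsIntPt ((n : ℝ) • x) := by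
  rw [Int.cast_smul_eq_zsmul]
  exact isIntPt_iff_mem_span.2 (zsmul_mem (isIntPt_iff_mem_span.1 hx) n)

lemma finite_isIntPt_of_isBounded {S : Set Pt} (hS : Bornology.IsBounded S) :
    {x ∈ S | IsIntPt x}.Finite := by
  simp only [isIntPt_iff_mem_span]
  exact ZSpan.setFinite_inter (Pi.basisFun ℝ (Fin 2)) hS

lemma IsRatPt.exists_natCast_smul {v : Pt} (hv : IsRatPt v) :
    ∃ N : ℕ, 0 < N ∧ IsIntPt ((N : ℝ) • v) := by
  choose c hc using hv
  have hden (x : ℚ) : (x.den : ℝ) * x = x.num := by exact_mod_cast x.den_mul_eq_num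
  refine ⟨(c 0).den * (c 1).den, Nat.mul_pos (c 0).den_pos (c 1).den_pos,
    Fin.forall_fin_two.2 ⟨⟨(c 1).den * (c 0).num, ?_⟩, ⟨(c 0).den * (c 1).num, ?_⟩⟩⟩
  · simp [hc, ← hden, mul_assoc, mul_left_comm]
  · simp [hc, ← hden, mul_assoc]

/-- The linear form `x ↦ det (u, x)`, whose level lines have direction `u`. -/
noncomputable def detForm (u : Pt) : Pt →ₗ[ℝ] ℝ :=
  u 0 • LinearMap.proj 1 - u 1 • LinearMap.proj 0

lemma detForm_apply (u x : Pt) : detForm u x = u 0 * x 1 - u 1 * x 0 := by simp [detForm]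

lemma detForm_self (u : Pt) : detForm u u = 0 := by simp [detForm_apply, mul_comm]

lemma IsIntPt.exists_detForm_eq_intCast {u x : Pt} (hu : IsIntPt u) (hx : IsIntPt x) :
    ∃ m : ℤ, detForm u x = m := by
  choose a ha using hu
  choose b hb using hx
  exact ⟨a 0 * b 1 - a 1 * b 0, by simp [detForm_apply, ha, hb]⟩

/-- A primitive vector of the lattice `ℤ²`: a vector with coprime integer coordinates. -/
def IsPrimitive (ρ : Pt) : Prop := ∃ p q : ℤ, IsCoprime p q ∧ ρ = ![(p : ℝ), (q : ℝ)]

lemma IsPrimitive.isIntPt {ρ : Pt} (hρ : IsPrimitive ρ) : IsIntPt ρ := by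
  obtain ⟨p, q, -, rfl⟩ := hρ
  exact Fin.forall_fin_two.2 ⟨⟨p, rfl⟩, ⟨q, rfl⟩⟩

lemma IsIntPt.isRatPt {x : Pt} (hx : IsIntPt x) : IsRatPt x := fun j =>
  (hx j).imp' (↑) fun z hz => by simp [hz]

lemma IsPrimitive.ne_zero {ρ : Pt} (hρ : IsPrimitive ρ) : ρ ≠ 0 := by
  obtain ⟨p, q, hpq, rfl⟩ := hρ
  simpa [imp_iff_not_or] using hpq.ne_zero_or_ne_zero

lemma IsIntPt.exists_isPrimitive {x : Pt} (hx : IsIntPt x) (hx0 : x ≠ 0) :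
    ∃ (ρ : Pt) (g : ℤ), IsPrimitive ρ ∧ 0 < g ∧ x = (g : ℝ) • ρ := by
  choose z hz using hx
  have hg : 0 < Int.gcd (z 0) (z 1) := by
    refine Nat.pos_of_ne_zero fun h => hx0 (funext (Fin.forall_fin_two.2 ?_))
    simpa [hz] using Int.gcd_eq_zero_iff.1 h
  obtain ⟨p, q, hpq, hp, hq⟩ := Int.exists_gcd_one hg
  refine ⟨![(p : ℝ), (q : ℝ)], Int.gcd (z 0) (z 1), ⟨p, q, Int.isCoprime_iff_gcd_eq_one.2 hpq, rfl⟩,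
    by exact_mod_cast hg, funext (Fin.forall_fin_two.2 ⟨?_, ?_⟩)⟩
  · simpa [mul_comm] using (hz 0).trans (congrArg (Int.cast (R := ℝ)) hp)
  · simpa [mul_comm] using (hz 1).trans (congrArg (Int.cast (R := ℝ)) hq)

lemma IsRatPt.exists_isPrimitive {v : Pt} (hv : IsRatPt v) (hv0 : v ≠ 0) :
    ∃ (ρ : Pt) (c : ℝ), IsPrimitive ρ ∧ 0 < c ∧ ρ = c • v := by
  obtain ⟨N, hN, hint⟩ := hv.exists_natCast_smul
  have hN' : (0 : ℝ) < N := by exact_mod_cast hN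
  obtain ⟨ρ, g, hρ, hg, hgρ⟩ := hint.exists_isPrimitive (smul_ne_zero hN'.ne' hv0)
  have hg' : (0 : ℝ) < g := by exact_mod_cast hg
  exact ⟨ρ, (g : ℝ)⁻¹ * N, hρ, by positivity, by rw [mul_smul, hgρ, inv_smul_smul₀ hg'.ne']⟩

/-- By Bézout, the line through `x` with direction `ρ` contains an integer point, which can be
translated along `ρ`. -/
lemma IsPrimitive.exists_isIntPt_add_smul {ρ x : Pt} (hρ : IsPrimitive ρ) {m : ℤ}
    (hx : detForm ρ x = m) : ∃ t : ℝ, 0 < t ∧ IsIntPt (x + t • ρ) := by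
  obtain ⟨p, q, ⟨u, v, huv⟩, rfl⟩ := hρ
  have huv' : (u : ℝ) * p + v * q = 1 := by exact_mod_cast huv
  have hx' : p * x 1 - q * x 0 = m := by rw [← hx, detForm_apply]; rfl
  obtain ⟨n, hn⟩ := exists_int_gt (u * x 0 + v * x 1)
  refine ⟨n - (u * x 0 + v * x 1), sub_pos.2 hn,
    Fin.forall_fin_two.2 ⟨⟨n * p - v * m, ?_⟩, ⟨n * q + u * m, ?_⟩⟩⟩
  · simp only [Pi.add_apply, Pi.smul_apply, Matrix.cons_val_zero, smul_eq_mul]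
    push_cast
    linear_combination -(v : ℝ) * hx' - x 0 * huv'
  · simp only [Pi.add_apply, Pi.smul_apply, Matrix.cons_val_one, Matrix.cons_val_fin_one,
      smul_eq_mul]
    push_cast
    linear_combination (u : ℝ) * hx' - x 1 * huv'

/-- Rounding down a large multiple of a point of an open cone moves it by a relatively small
amount. -/
lemma exists_int_add_Icc_mem_of_isOpen_cone {ι : Type*} [Finite ι] {U : Set (ι → ℝ)}
    (hU : IsOpen U) (hne : U.Nonempty) (hcone : ∀ x ∈ U, ∀ c : ℝ, 0 < c → c • x ∈ U) :
    ∃ z : ι → ℤ, ∀ e ∈ Icc (0 : ι → ℝ) 1, (fun j => (z j : ℝ)) + e ∈ U := by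
  cases nonempty_fintype ι
  obtain ⟨x, hx⟩ := hne
  obtain ⟨ε, hε, hball⟩ := Metric.isOpen_iff.1 hU x hx
  obtain ⟨n, hn⟩ := exists_nat_one_div_lt hε
  have hN : (0 : ℝ) < n + 1 := by positivity
  refine ⟨fun j => ⌊(n + 1) * x j⌋, fun e he => ?_⟩
  set y : ι → ℝ := (fun j => (⌊(n + 1) * x j⌋ : ℝ)) + e with hy
  suffices hmem : (n + 1 : ℝ)⁻¹ • y ∈ U by
    simpa [smul_inv_smul₀ hN.ne'] using hcone _ hmem (n + 1) hN
  refine hball ((dist_pi_le_iff (by positivity)).2 (fun j => ?_) |>.trans_lt hn)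
  have hdist : |y j - (n + 1) * x j| ≤ 1 := by
    have hfloor := Int.floor_le ((n + 1) * x j)
    have hlt := Int.lt_floor_add_one ((n + 1) * x j)
    have he0 : 0 ≤ e j := he.1 j
    have he1 : e j ≤ 1 := he.2 j
    rw [abs_le, hy, Pi.add_apply]
    constructor <;> linarith
  calc dist (((n + 1 : ℝ)⁻¹ • y) j) (x j) = |(y j - (n + 1) * x j) / (n + 1)| := by
        rw [Real.dist_eq, Pi.smul_apply, smul_eq_mul]; congr 1; field_simp
    _ ≤ 1 / (n + 1) := by rw [abs_div, abs_of_pos hN]; gcongr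

/-- The cone contains three integer points `z`, `z + e₁`, `z + e₂`, and the forms `detForm` at these
cannot all be integral at `f`, since their differences are the coordinates of `f`. -/
lemma exists_isPrimitive_mem_forall_detForm_ne {U : Set Pt} (hU : IsOpen U) (hne : U.Nonempty)
    (hcone : ∀ x ∈ U, ∀ c : ℝ, 0 < c → c • x ∈ U) {f : Pt} (hf : ¬ IsIntPt f) :
    ∃ ρ ∈ U, IsPrimitive ρ ∧ ∀ m : ℤ, detForm ρ f ≠ m := by
  obtain ⟨z, hz⟩ := exists_int_add_Icc_mem_of_isOpen_cone hU hne hcone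
  obtain ⟨y, hyU, hy, hyf⟩ : ∃ y ∈ U, IsIntPt y ∧ ∀ m : ℤ, detForm y f ≠ m := by
    by_contra! hint
    have hcube (a b : ℤ) (ha : a ∈ Icc 0 1) (hb : b ∈ Icc 0 1) :
        ![(a : ℝ), (b : ℝ)] ∈ Icc (0 : Pt) 1 := by
      simp only [mem_Icc, Pi.le_def, Fin.forall_fin_two, Pi.zero_apply, Pi.one_apply,
        Matrix.cons_val_zero, Matrix.cons_val_one, Matrix.cons_val_fin_one]
      exact ⟨⟨mod_cast ha.1, mod_cast hb.1⟩, mod_cast ha.2, mod_cast hb.2⟩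
    have hcorner (a b : ℤ) (ha : a ∈ Icc 0 1) (hb : b ∈ Icc 0 1) :
        ∃ m : ℤ, (z 0 + a) * f 1 - (z 1 + b) * f 0 = m := by
      obtain ⟨m, hm⟩ := hint _ (hz _ (hcube a b ha hb))
        (Fin.forall_fin_two.2 ⟨⟨z 0 + a, by simp⟩, ⟨z 1 + b, by simp⟩⟩)
      exact ⟨m, by rw [← hm, detForm_apply]; simp⟩
    obtain ⟨m₀, h₀⟩ := hcorner 0 0 (by simp) (by simp)
    obtain ⟨m₁, h₁⟩ := hcorner 1 0 (by simp) (by simp)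
    obtain ⟨m₂, h₂⟩ := hcorner 0 1 (by simp) (by simp)
    push_cast at h₀ h₁ h₂
    refine hf (Fin.forall_fin_two.2 ⟨⟨m₀ - m₂, ?_⟩, ⟨m₁ - m₀, ?_⟩⟩)
    · push_cast; linarith
    · push_cast; linarith
  have hy0 : y ≠ 0 := by
    rintro rfl
    exact hyf 0 (by simp [detForm_apply])
  obtain ⟨ρ, g, hρ, hg, rfl⟩ := hy.exists_isPrimitive hy0
  have hg' : (0 : ℝ) < g := by exact_mod_cast hg
  refine ⟨ρ, by simpa [inv_smul_smul₀ hg'.ne'] using hcone _ hyU _ (inv_pos.2 hg'), hρ,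
    fun m hm => hyf (g * m) ?_⟩
  rw [detForm_apply] at hm ⊢
  push_cast [← hm, Pi.smul_apply, smul_eq_mul]
  ring

/-! ### Induced sets and split sets -/

section InducedSet

variable {k : ℕ} {r : Fin k → Pt} {f : Pt} {α : Fin k → ℝ}

lemma inducedSet_subset_halfSpace {L : Pt →ₗ[ℝ] ℝ} {b : ℝ} (hf : L f ≤ b)
    (hr : ∀ i, L (r i) ≤ α i * (b - L f)) : inducedSet k r f α ⊆ {x | L x ≤ b} := by
  rintro _ ⟨x, hx, y, ⟨n, c, v, hc, hv, rfl⟩, rfl⟩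
  have hLx : L x ≤ b := by
    refine convexHull_min ?_ (convex_halfSpace_le L.isLinear b) hx
    rintro _ (rfl | ⟨i, hi, rfl⟩)
    · exact hf
    · have := (inv_mul_le_iff₀ hi).2 (hr i)
      simp only [mem_ofPred_eq, map_add, map_smul, smul_eq_mul]
      linarith
  have hLy : L (∑ j, c j • v j) ≤ 0 := by
    rw [map_sum]
    refine Finset.sum_nonpos fun j _ => ?_
    obtain ⟨i, hi, hvi⟩ := hv j
    rw [map_smul, hvi, smul_eq_mul]
    exact mul_nonpos_of_nonneg_of_nonpos (hc j) (by simpa [hi] using hr i)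
  rw [mem_ofPred_eq, map_add]
  linarith

lemma IsPrimitive.isSplitSet {ρ : Pt} (hρ : IsPrimitive ρ) (z : ℤ) :
    IsSplitSet ({x | detForm ρ x ≤ z + 1} ∩ {x | (-detForm ρ) x ≤ -z}) := by
  obtain ⟨p, q, hpq, rfl⟩ := hρ
  refine ⟨![-q, p], z, ?_, ?_⟩
  · simpa [or_comm, imp_iff_not_or] using hpq.ne_zero_or_ne_zero
  · ext x
    have hsum : ∑ j, ((![-q, p] j : ℤ) : ℝ) * x j = detForm ![(p : ℝ), (q : ℝ)] x := by
      simp [detForm_apply, Fin.sum_univ_two, neg_add_eq_sub]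
    simp only [mem_inter_iff, mem_ofPred_eq, hsum, LinearMap.neg_apply, neg_le_neg_iff, and_comm]

lemma le_mul_of_forall_mul_ne {𝕜 : Type*} [Field 𝕜] [LinearOrder 𝕜] [IsStrictOrderedRing 𝕜]
    {a w y : 𝕜} (ha : 0 ≤ a) (hw : 0 ≤ w) (h : ∀ c, 0 ≤ c → a * c < 1 → c * y ≠ w) :
    y ≤ a * w := by
  by_contra! hlt
  have hy : 0 < y := (mul_nonneg ha hw).trans_lt hlt
  exact h (w / y) (by positivity) (by rwa [← mul_div_assoc, div_lt_one hy])
    (div_mul_cancel₀ w hy.ne')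

lemma IsPrimitive.exists_detForm_eq_intCast {ρ : Pt} (hρ : IsPrimitive ρ) (hα : ∀ i, 0 ≤ α i)
    (hnotsplit : ¬ ∃ T : Set Pt, IsSplitSet T ∧ inducedSet k r f α ⊆ T) :
    ∃ s : Fin k → ℝ, (∀ i, 0 ≤ s i) ∧ ∑ i, α i * s i < 1 ∧
      ∃ m : ℤ, detForm ρ (f + ∑ i, s i • r i) = m := by
  by_contra! hlevel
  set L := detForm ρ
  have hray (i : Fin k) (c : ℝ) (hc : 0 ≤ c) (hαc : α i * c < 1) (m : ℤ) :
      L f + c * L (r i) ≠ m := by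
    simpa [Pi.single_apply, ite_smul] using hlevel (Pi.single i c)
      (fun j => by rw [Pi.single_apply]; split_ifs <;> simp [hc])
      (by simpa [Pi.single_apply] using hαc) m
  have hLf (m : ℤ) : L f ≠ m := by simpa using hlevel 0 (by simp) (by simp) m
  have hlow : (⌊L f⌋ : ℝ) < L f := (Int.floor_le _).lt_of_ne (hLf _).symm
  have hupp : L f < ⌊L f⌋ + 1 := Int.lt_floor_add_one _
  refine hnotsplit ⟨_, hρ.isSplitSet ⌊L f⌋, subset_inter
    (inducedSet_subset_halfSpace hupp.le fun i => ?_)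
    (inducedSet_subset_halfSpace (neg_le_neg hlow.le) fun i => ?_)⟩
  · refine le_mul_of_forall_mul_ne (hα i) (by linarith) fun c hc hαc heq =>
      hray i c hc hαc (⌊L f⌋ + 1) ?_
    push_cast
    linarith
  · refine le_mul_of_forall_mul_ne (hα i) (by simpa using hlow.le) fun c hc hαc heq =>
      hray i c hc hαc ⌊L f⌋ ?_
    simp only [LinearMap.neg_apply] at heq
    linarith

lemma IsPrimitive.exists_isIntPt_of_not_split {ρ : Pt} (hρ : IsPrimitive ρ) (hα : ∀ i, 0 ≤ α i)
    (hnotsplit : ¬ ∃ T : Set Pt, IsSplitSet T ∧ inducedSet k r f α ⊆ T) :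
    ∃ (s : Fin k → ℝ) (t : ℝ), (∀ i, 0 ≤ s i) ∧ 0 < t ∧ ∑ i, α i * s i < 1 ∧
      IsIntPt (f + ∑ i, s i • r i + t • ρ) := by
  obtain ⟨s, hs, hcost, m, hm⟩ := hρ.exists_detForm_eq_intCast hα hnotsplit
  obtain ⟨t, ht, hint⟩ := hρ.exists_isIntPt_add_smul hm
  exact ⟨s, t, hs, ht, hcost, hint⟩

lemma coeff_pos_of_not_split (hr_rat : ∀ i, IsRatPt (r i)) (hr_ne : ∀ i, r i ≠ 0)
    (hα : ∀ i, 0 ≤ α i) (hvalid : ValidIneq k r f α 1)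
    (hnotsplit : ¬ ∃ T : Set Pt, IsSplitSet T ∧ inducedSet k r f α ⊆ T) (i : Fin k) :
    0 < α i := by
  refine (hα i).lt_of_ne fun hi => ?_
  obtain ⟨ρ, c, hρ, hc, hρi⟩ := (hr_rat i).exists_isPrimitive (hr_ne i)
  obtain ⟨s, t, hs, ht, hcost, hint⟩ := hρ.exists_isIntPt_of_not_split hα hnotsplit
  have hstep : 0 ≤ (Pi.single i (t * c) : Fin k → ℝ) := Pi.single_nonneg.2 (by positivity)
  have hle := hvalid (_, s + Pi.single i (t * c)) ⟨hint, fun j => ?_, ?_⟩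
  · refine hcost.not_ge ?_
    simpa [mul_add, Finset.sum_add_distrib, Pi.single_apply, ← hi] using hle
  · exact add_nonneg (hs j) (hstep j)
  · simp [add_smul, Finset.sum_add_distrib, Pi.single_apply, ite_smul, hρi, mul_smul, add_assoc]

end InducedSet

/-! ### Lifting a coefficient -/

section Lifting

variable {k : ℕ} {r : Fin k → Pt} {f : Pt} {β : Fin k → ℝ} {j : Fin k}

/-- The basic nonnegative solutions `s` for which `f + R s` is integral and `∑ βᵢ sᵢ < 1`. They
are what a lifting of the inequality with coefficients `β` has to cut off. -/
def basicViolators (k : ℕ) (r : Fin k → Pt) (f : Pt) (β : Fin k → ℝ) : Set (Fin k → ℝ) :=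
  {s | (∀ i, 0 ≤ s i) ∧ IsIntPt (f + ∑ i, s i • r i) ∧ ∑ i, β i * s i < 1 ∧
    LinearIndepOn ℝ r (Function.support s)}

lemma finite_basicViolators_le_one (hβ : ∀ i, 0 ≤ β i) (hβj : ∀ i, β i = 0 → i = j) :
    {s ∈ basicViolators k r f β | s j ≤ 1}.Finite := by
  set box : Set (Fin k → ℝ) := Icc 0 (Function.update (fun i => (β i)⁻¹) j 1)
  set R : (Fin k → ℝ) → Pt := fun s => ∑ i, s i • r i
  have hY : {y ∈ (fun s => f + R s) '' box | IsIntPt y}.Finite :=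
    finite_isIntPt_of_isBounded (isCompact_Icc.image (by fun_prop)).isBounded
  refine (finite_basic_solutions r (hY.preimage (add_right_injective f).injOn)).subset ?_
  rintro s ⟨⟨hs, hint, hcost, hind⟩, hsj⟩
  refine ⟨hind, ⟨s, ⟨hs, fun i => ?_⟩, rfl⟩, hint⟩
  rcases eq_or_ne i j with rfl | hi
  · simpa using hsj
  · have hβi : 0 < β i := (hβ i).lt_of_ne' (mt (hβj i) hi)
    rw [Function.update_of_ne hi, ← one_div, le_div_iff₀' hβi]
    exact (Finset.single_le_sum (f := fun i => β i * s i)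
      (fun i _ => mul_nonneg (hβ i) (hs i)) (Finset.mem_univ i)).trans hcost.le

/-- Shortening `s j` by an integer keeps `f + R s` integral, as `r j` is an integer vector. -/
lemma exists_basicViolator_le_one (hr : IsIntPt (r j)) (hβj : β j = 0) {s : Fin k → ℝ}
    (hs : s ∈ basicViolators k r f β) (hsj : 0 < s j) :
    ∃ s' ∈ basicViolators k r f β, 0 < s' j ∧ s' j ≤ 1 ∧ s' j ≤ s j ∧
      ∑ i, β i * s' i = ∑ i, β i * s i := by
  obtain ⟨hs0, hint, hcost, hind⟩ := hs
  set n : ℤ := ⌈s j⌉ - 1 with hn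
  have hn0 : (0 : ℝ) ≤ n := by exact_mod_cast Int.sub_nonneg_of_le (Int.one_le_ceil_iff.2 hsj)
  have hlt : (n : ℝ) < s j := by simpa [hn, sub_lt_iff_lt_add] using Int.ceil_lt_add_one (s j)
  have hle : s j ≤ n + 1 := by simpa [hn] using Int.le_ceil (s j)
  set s' : Fin k → ℝ := s - Pi.single j (n : ℝ) with hs'
  have hs'j : s' j = s j - n := by simp [hs']
  have hs'ne {i : Fin k} (hi : i ≠ j) : s' i = s i := by simp [hs', hi]
  have hsupp : Function.support s' = Function.support s := by
    ext i
    rcases eq_or_ne i j with rfl | hi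
    · simp only [Function.mem_support, hs'j, ne_eq, (sub_pos.2 hlt).ne', hsj.ne']
    · simp only [Function.mem_support, hs'ne hi]
  have hcost' : ∑ i, β i * s' i = ∑ i, β i * s i := by
    simp [hs', mul_sub, Pi.single_apply, hβj]
  have hint' : IsIntPt (f + ∑ i, s' i • r i) := by
    convert hint.add (hr.intCast_smul (-n)) using 1
    simp [hs', sub_smul, Finset.sum_sub_distrib, Pi.single_apply, ite_smul, ← sub_eq_add_neg,
      add_sub_assoc]
  refine ⟨s', ⟨fun i => ?_, hint', hcost'.trans_lt hcost, hsupp ▸ hind⟩, by linarith, by linarith,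
    by linarith, hcost'⟩
  rcases eq_or_ne i j with rfl | hi
  · linarith
  · exact (hs0 i).trans_eq (hs'ne hi).symm

lemma exists_basicViolator_maximal (hr : IsIntPt (r j)) (hβ : ∀ i, 0 ≤ β i)
    (hβj : ∀ i, β i = 0 ↔ i = j) (hpos : ∀ s ∈ basicViolators k r f β, 0 < s j)
    (hne : (basicViolators k r f β).Nonempty) :
    ∃ s ∈ basicViolators k r f β, ∀ s' ∈ basicViolators k r f β,
      (1 - ∑ i, β i * s' i) / s' j ≤ (1 - ∑ i, β i * s i) / s j := by
  have hne' : {s ∈ basicViolators k r f β | s j ≤ 1}.Nonempty := by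
    obtain ⟨s, hs⟩ := hne
    obtain ⟨s', hs', -, hle, -⟩ := exists_basicViolator_le_one hr ((hβj j).2 rfl) hs (hpos s hs)
    exact ⟨s', hs', hle⟩
  obtain ⟨s, hs, hmax⟩ := Set.exists_max_image _
    (fun s : Fin k → ℝ => (1 - ∑ i, β i * s i) / s j)
    (finite_basicViolators_le_one hβ fun i => (hβj i).1) hne'
  refine ⟨s, hs.1, fun t ht => ?_⟩
  obtain ⟨t', ht', ht'0, ht'1, hle, hcost⟩ :=
    exists_basicViolator_le_one hr ((hβj j).2 rfl) ht (hpos t ht)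
  have hslack : 0 ≤ 1 - ∑ i, β i * t i := sub_nonneg.2 ht.2.2.1.le
  calc (1 - ∑ i, β i * t i) / t j ≤ (1 - ∑ i, β i * t i) / t' j := by gcongr
    _ = (1 - ∑ i, β i * t' i) / t' j := by rw [hcost]
    _ ≤ _ := hmax t' ⟨ht', ht'1⟩

lemma sum_update_mul_of_eq_zero (hβj : β j = 0) (a : ℝ) (s : Fin k → ℝ) :
    ∑ i, Function.update β j a i * s i = ∑ i, β i * s i + a * s j := by
  rw [← Finset.add_sum_erase _ _ (Finset.mem_univ j),
    ← Finset.add_sum_erase Finset.univ (fun i => β i * s i) (Finset.mem_univ j), hβj,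
    Function.update_self, zero_mul, zero_add, add_comm]
  congr 1
  exact Finset.sum_congr rfl fun i hi => by rw [Function.update_of_ne (Finset.ne_of_mem_erase hi)]

/-- The lifted coefficient is the largest one required by a basic violator; it suffices because
every point of `mixedP` is dominated in cost by a basic solution with the same integer point. -/
theorem exists_lifting (hr : IsIntPt (r j)) (hβ : ∀ i, 0 ≤ β i) (hβj : ∀ i, β i = 0 ↔ i = j)
    (hvalid : ∀ p ∈ mixedP k r f, p.2 j = 0 → 1 ≤ ∑ i, β i * p.2 i)
    (hviol : ∃ p ∈ mixedP k r f, ∑ i, β i * p.2 i < 1) :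
    ∃ a : ℝ, 0 < a ∧ ValidIneq k r f (Function.update β j a) 1 ∧
      ∃ p ∈ mixedP k r f, p.2 j ≠ 0 ∧ ∑ i, Function.update β j a i * p.2 i = 1 := by
  have hsum_update := sum_update_mul_of_eq_zero ((hβj j).2 rfl)
  have hpos (s) (hs : s ∈ basicViolators k r f β) : 0 < s j :=
    (hs.1 j).lt_of_ne fun h => hs.2.2.1.not_ge (hvalid (_, s) ⟨hs.2.1, hs.1, rfl⟩ h.symm)
  have hne : (basicViolators k r f β).Nonempty := by
    obtain ⟨⟨x, s⟩, ⟨hint, hs, hx⟩, hlt⟩ := hviol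
    simp only at hint hs hx hlt
    subst hx
    obtain ⟨s', hs', hsum, hcost, hind⟩ := exists_basic_solution (r := r) hβ hs
    exact ⟨s', hs', hsum ▸ hint, hcost.trans_lt hlt, hind⟩
  obtain ⟨s, hs, hmax⟩ := exists_basicViolator_maximal hr hβ hβj hpos hne
  set a := (1 - ∑ i, β i * s i) / s j with ha
  have ha0 : 0 < a := div_pos (sub_pos.2 hs.2.2.1) (hpos s hs)
  refine ⟨a, ha0, ?_, (_, s), ⟨hs.2.1, hs.1, rfl⟩, (hpos s hs).ne', ?_⟩
  · rintro ⟨x, t⟩ ⟨hint, ht, hx⟩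
    simp only at hint ht hx ⊢
    subst hx
    have hβa : 0 ≤ Function.update β j a := le_update_iff.2 ⟨ha0.le, fun i _ => hβ i⟩
    obtain ⟨t', ht', hsum, hcost, hind⟩ := exists_basic_solution (r := r) hβa ht
    refine le_trans ?_ hcost
    rw [hsum_update]
    rcases lt_or_ge (∑ i, β i * t' i) 1 with hlt | hge
    · have hmem : t' ∈ basicViolators k r f β := ⟨ht', hsum ▸ hint, hlt, hind⟩
      linarith [(div_le_iff₀ (hpos t' hmem)).1 (hmax t' hmem)]
    · exact le_add_of_le_of_nonneg hge (mul_nonneg ha0.le (ht' j))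
  · rw [hsum_update, ha, div_mul_cancel₀ _ (hpos s hs).ne']
    ring

end Lifting

/-! ### Affine dimension -/

section AffDim

variable {V W : Type*} [AddCommGroup V] [Module ℝ V] [AddCommGroup W] [Module ℝ W]

lemma affDim_eq_finrank_vectorSpan (S : Set V) :
    affDim S = Module.finrank ℝ (vectorSpan ℝ S) := by
  rw [affDim, direction_affineSpan]

lemma affDim_empty : affDim (∅ : Set V) = 0 := by
  rw [affDim_eq_finrank_vectorSpan, vectorSpan_empty, finrank_bot]

lemma affDim_convexHull (S : Set V) : affDim (convexHull ℝ S) = affDim S := by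
  rw [affDim, affineSpan_convexHull, affDim]

lemma affDim_closure {V : Type*} [NormedAddCommGroup V] [NormedSpace ℝ V] [FiniteDimensional ℝ V]
    (S : Set V) : affDim (closure S) = affDim S := by
  have hspan : affineSpan ℝ (closure S) = affineSpan ℝ S :=
    le_antisymm (affineSpan_le.2 (closure_minimal (subset_affineSpan ℝ S)
      (affineSpan ℝ S).closed_of_finiteDimensional)) (affineSpan_mono ℝ subset_closure)
  rw [affDim, hspan, affDim]

lemma affDim_image {φ : V →ₗ[ℝ] W} (hφ : Function.Injective φ) (S : Set V) :
    affDim (φ '' S) = affDim S := by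
  rw [affDim_eq_finrank_vectorSpan, affDim_eq_finrank_vectorSpan]
  exact (congrArg (fun U : Submodule ℝ W => Module.finrank ℝ U)
    (φ.toAffineMap.map_vectorSpan (s := S)).symm).trans
    (Submodule.equivMapOfInjective φ hφ _).finrank_eq.symm

lemma affDim_lt_of_subset_of_apply_ne [FiniteDimensional ℝ V] {S T : Set V} (hST : S ⊆ T)
    (hS : S.Nonempty) {φ : V →ₗ[ℝ] ℝ} {c : ℝ} (hφ : ∀ x ∈ S, φ x = c) {y : V} (hy : y ∈ T)
    (hne : φ y ≠ c) : affDim S < affDim T := by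
  rw [affDim_eq_finrank_vectorSpan, affDim_eq_finrank_vectorSpan]
  refine Submodule.finrank_lt_finrank_of_lt ((vectorSpan_mono ℝ hST).lt_of_not_ge fun hle => ?_)
  have hker : vectorSpan ℝ S ≤ LinearMap.ker φ := by
    rw [vectorSpan, Submodule.span_le]
    rintro _ ⟨x, hx, x', hx', rfl⟩
    simp [hφ x hx, hφ x' hx']
  obtain ⟨x, hx⟩ := hS
  have hmem := hker (hle (vsub_mem_vectorSpan ℝ hy (hST hx)))
  rw [LinearMap.mem_ker, vsub_eq_sub, map_sub, hφ x hx] at hmem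
  exact hne (sub_eq_zero.1 hmem)

end AffDim

/-! ### Facets of the mixed-integer hull -/

section Facet

variable {k : ℕ} {r : Fin k → Pt} {f ρ : Pt} {α : Fin k → ℝ} {a γ : ℝ}

/-- The map `s ↦ (R s, s)` parametrizing the direction of the affine space `x = f + R s`. -/
noncomputable def graphMap (r : Fin k → Pt) : (Fin k → ℝ) →ₗ[ℝ] Pt × (Fin k → ℝ) :=
  (Fintype.linearCombination ℝ r).prod LinearMap.id

lemma graphMap_apply (r : Fin k → Pt) (s : Fin k → ℝ) : graphMap r s = (∑ i, s i • r i, s) := by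
  simp [graphMap, Fintype.linearCombination_apply]

lemma graphMap_injective (r : Fin k → Pt) : Function.Injective (graphMap r) := fun s t h => by
  simpa [graphMap_apply] using congrArg Prod.snd h

lemma add_graphMap_single_mem_mixedP {p : Pt × (Fin k → ℝ)} (hp : p ∈ mixedP k r f) {i : Fin k}
    {N : ℝ} (hN : 0 ≤ N) (hint : IsIntPt (N • r i)) :
    p + graphMap r (Pi.single i N) ∈ mixedP k r f := by
  have hsum : ∑ l, (Pi.single i N : Fin k → ℝ) l • r l = N • r i := by
    simp [Pi.single_apply, ite_smul]
  have hnonneg : 0 ≤ (Pi.single i N : Fin k → ℝ) := Pi.single_nonneg.2 hN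
  rw [graphMap_apply, hsum]
  refine ⟨hp.1.add hint, fun l => add_nonneg (hp.2.1 l) (hnonneg l), ?_⟩
  simp only [Prod.fst_add, Prod.snd_add, Pi.add_apply, add_smul, Finset.sum_add_distrib, hsum,
    hp.2.2, add_assoc]

lemma vectorSpan_mixedP (hr : ∀ i, IsRatPt (r i)) (hne : (mixedP k r f).Nonempty) :
    vectorSpan ℝ (mixedP k r f) = LinearMap.range (graphMap r) := by
  refine le_antisymm ?_ ?_
  · rw [vectorSpan, Submodule.span_le]
    rintro _ ⟨p, hp, q, hq, rfl⟩
    refine ⟨p.2 - q.2, ?_⟩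
    rw [graphMap_apply]
    refine Prod.ext ?_ rfl
    simp [hp.2.2, hq.2.2, sub_smul, Finset.sum_sub_distrib]
  · rw [LinearMap.range_eq_map, ← (Pi.basisFun ℝ (Fin k)).span_eq, Submodule.map_span,
      Submodule.span_le]
    rintro _ ⟨_, ⟨i, rfl⟩, rfl⟩
    obtain ⟨p, hp⟩ := hne
    obtain ⟨N, hN, hint⟩ := (hr i).exists_natCast_smul
    have hmem := vsub_mem_vectorSpan ℝ
      (add_graphMap_single_mem_mixedP hp (Nat.cast_nonneg N) hint) hp
    have hsingle : (Pi.single i (N : ℝ) : Fin k → ℝ) = (N : ℝ) • Pi.basisFun ℝ (Fin k) i := by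
      simp [← Pi.single_smul']
    rw [vsub_eq_sub, add_sub_cancel_left, hsingle, map_smul] at hmem
    exact (Submodule.smul_mem_iff _ (Nat.cast_ne_zero.2 hN.ne')).1 hmem

lemma affDim_convexHull_mixedP (hr : ∀ i, IsRatPt (r i)) (hne : (mixedP k r f).Nonempty) :
    affDim (convexHull ℝ (mixedP k r f)) = k := by
  rw [affDim_convexHull, affDim_eq_finrank_vectorSpan, vectorSpan_mixedP hr hne,
    LinearMap.finrank_range_of_inj (graphMap_injective r), Module.finrank_fin_fun]

lemma IsFacet.nonempty_mixedP (hfacet : IsFacet k r f α γ) : (mixedP k r f).Nonempty := by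
  by_contra hempty
  have hdim := hfacet.2
  simp [not_nonempty_iff_eq_empty.1 hempty, affDim_empty] at hdim

/-- The embedding `(x, s) ↦ (x, (s, 0))`, under which `mixedP k r f` is the part of the
mixed-integer set of an additional ray where that ray is not used. -/
def snocZero (k : ℕ) : Pt × (Fin k → ℝ) →ₗ[ℝ] Pt × (Fin (k + 1) → ℝ) where
  toFun p := (p.1, Fin.snoc p.2 0)
  map_add' p q := Prod.ext rfl (funext (Fin.forall_fin_succ'.2 (by simp)))
  map_smul' c p := Prod.ext rfl (funext (Fin.forall_fin_succ'.2 (by simp)))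

lemma snocZero_apply (p : Pt × (Fin k → ℝ)) :
    snocZero k p = (p.1, (Fin.snoc p.2 0 : Fin (k + 1) → ℝ)) := rfl

lemma snocZero_injective (k : ℕ) : Function.Injective (snocZero k) := by
  intro p q h
  obtain ⟨hx, hs⟩ := Prod.mk.inj h
  exact Prod.ext hx (Fin.snoc_injective2 hs).1

lemma snocZero_mem_mixedP_iff {p : Pt × (Fin k → ℝ)} :
    snocZero k p ∈ mixedP (k + 1) (Fin.snoc r ρ) f ↔ p ∈ mixedP k r f := by
  simp [mixedP, snocZero_apply, Fin.forall_fin_succ', Fin.sum_univ_castSucc]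

lemma snocZero_mem_closure {p : Pt × (Fin k → ℝ)} (hp : p ∈ closure (convexHull ℝ (mixedP k r f))) :
    snocZero k p ∈ closure (convexHull ℝ (mixedP (k + 1) (Fin.snoc r ρ) f)) := by
  refine map_mem_closure (snocZero k).continuous_of_finiteDimensional hp fun q hq => ?_
  have himage : snocZero k q ∈ convexHull ℝ (snocZero k '' mixedP k r f) :=
    (snocZero k).image_convexHull _ ▸ mem_image_of_mem _ hq
  exact convexHull_mono (image_subset_iff.2 fun _ => snocZero_mem_mixedP_iff.2) himage

lemma ValidIneq.of_last_eq_zero (hvalid : ValidIneq k r f α γ)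
    {p : Pt × (Fin (k + 1) → ℝ)} (hp : p ∈ mixedP (k + 1) (Fin.snoc r ρ) f)
    (hlast : p.2 (Fin.last k) = 0) : γ ≤ ∑ i, (Fin.snoc α a : Fin (k + 1) → ℝ) i * p.2 i := by
  obtain ⟨q, rfl⟩ : ∃ q, snocZero k q = p :=
    ⟨(p.1, Fin.init p.2), Prod.ext rfl (by rw [snocZero_apply, ← hlast, Fin.snoc_init_self])⟩
  simpa [snocZero_apply, Fin.sum_univ_castSucc] using hvalid q (snocZero_mem_mixedP_iff.1 hp)

lemma affDim_face_lt {i : Fin k} (hr : IsRatPt (r i)) (hα : 0 < α i)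
    {p : Pt × (Fin k → ℝ)} (hp : p ∈ mixedP k r f) (htight : ∑ i, α i * p.2 i = γ) :
    affDim {p ∈ closure (convexHull ℝ (mixedP k r f)) | ∑ i, α i * p.2 i = γ} <
      affDim (convexHull ℝ (mixedP k r f)) := by
  rw [← affDim_closure (convexHull ℝ (mixedP k r f))]
  obtain ⟨N, hN, hint⟩ := hr.exists_natCast_smul
  have hsub : mixedP k r f ⊆ closure (convexHull ℝ (mixedP k r f)) :=
    (subset_convexHull ℝ _).trans subset_closure
  let cost : Pt × (Fin k → ℝ) →ₗ[ℝ] ℝ := Fintype.linearCombination ℝ α ∘ₗ LinearMap.snd ℝ Pt _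
  have hcost (q) : cost q = ∑ i, α i * q.2 i := by
    simp [cost, Fintype.linearCombination_apply, mul_comm]
  refine affDim_lt_of_subset_of_apply_ne (sep_subset _ _) ⟨p, hsub hp, htight⟩ (φ := cost)
    (fun q hq => (hcost q).trans hq.2)
    (hsub (add_graphMap_single_mem_mixedP hp (Nat.cast_nonneg N) hint)) ?_
  rw [map_add, hcost p, htight, hcost, graphMap_apply]
  simp [Pi.single_apply, hα.ne', hN.ne']

/-- The face of the lifted inequality contains the original facet and a point using the new ray. -/
theorem IsFacet.snoc (hk : 2 ≤ k) (hr : ∀ i, IsRatPt (r i)) (hρ : IsRatPt ρ)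
    (hfacet : IsFacet k r f α γ) (ha : 0 < a)
    (hvalid : ValidIneq (k + 1) (Fin.snoc r ρ) f (Fin.snoc α a) γ)
    {p : Pt × (Fin (k + 1) → ℝ)} (hp : p ∈ mixedP (k + 1) (Fin.snoc r ρ) f)
    (hlast : p.2 (Fin.last k) ≠ 0)
    (htight : ∑ i, (Fin.snoc α a : Fin (k + 1) → ℝ) i * p.2 i = γ) :
    IsFacet (k + 1) (Fin.snoc r ρ) f (Fin.snoc α a) γ := by
  refine ⟨hvalid, ?_⟩
  have hr' : ∀ i, IsRatPt ((Fin.snoc r ρ : Fin (k + 1) → Pt) i) :=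
    Fin.forall_fin_succ'.2 (by simpa using ⟨hr, hρ⟩)
  have hupper := affDim_face_lt (hr' (Fin.last k)) (by simpa using ha) hp htight
  have hdim := hfacet.2
  rw [affDim_convexHull_mixedP hr hfacet.nonempty_mixedP] at hdim
  rw [affDim_convexHull_mixedP hr' ⟨p, hp⟩] at hupper ⊢
  set F := {p ∈ closure (convexHull ℝ (mixedP k r f)) | ∑ i, α i * p.2 i = γ}
  set F' := {p ∈ closure (convexHull ℝ (mixedP (k + 1) (Fin.snoc r ρ) f)) |
    ∑ i, (Fin.snoc α a : Fin (k + 1) → ℝ) i * p.2 i = γ}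
  have hF : F.Nonempty := by
    by_contra hempty
    rw [not_nonempty_iff_eq_empty.1 hempty, affDim_empty] at hdim
    omega
  have hsub : snocZero k '' F ⊆ F' := by
    rintro _ ⟨q, ⟨hq, hqα⟩, rfl⟩
    exact ⟨snocZero_mem_closure hq, by simpa [snocZero_apply, Fin.sum_univ_castSucc] using hqα⟩
  have hpF' : p ∈ F' := ⟨subset_closure (subset_convexHull ℝ _ hp), htight⟩
  have hlower : affDim (snocZero k '' F) < affDim F' :=
    affDim_lt_of_subset_of_apply_ne hsub (hF.image _)
      (φ := LinearMap.proj (Fin.last k) ∘ₗ LinearMap.snd ℝ Pt _) (c := 0)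
      (by rintro _ ⟨q, -, rfl⟩; simp [snocZero_apply]) hpF' hlast
  rw [affDim_image (snocZero_injective k)] at hlower
  omega

end Facet

/-! ### The induced set of the extended system -/

lemma IsT1.isIntPt_of_mem_extremePoints {S : Set Pt} (hS : IsT1 S) {v : Pt}
    (hv : v ∈ S.extremePoints ℝ) : IsIntPt v := by
  obtain ⟨w, -, hw, rfl, -⟩ := hS
  obtain ⟨i, rfl⟩ := extremePoints_convexHull_subset hv
  exact hw i

section Extension

variable {k : ℕ} {r : Fin k → Pt} {f ρ : Pt} {α : Fin k → ℝ} {a : ℝ}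

lemma sub_mem_hull_of_mem_convexHull (hα : ∀ i, 0 ≤ α i) {x : Pt}
    (hx : x ∈ convexHull ℝ (range fun i => f + (α i)⁻¹ • r i)) :
    x - f ∈ PointedCone.hull ℝ (range r) := by
  have hconvex : Convex ℝ ((fun x => -f + x) ⁻¹' (PointedCone.hull ℝ (range r) : Set Pt)) :=
    (PointedCone.convex _).translate_preimage_right _
  rw [sub_eq_neg_add]
  refine convexHull_min (range_subset_iff.2 fun i => ?_) hconvex hx
  rw [mem_preimage, neg_add_cancel_left]
  exact (PointedCone.hull ℝ (range r)).smul_mem (inv_nonneg.2 (hα i))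
    (PointedCone.subset_hull (mem_range_self i))

lemma not_isT1_of_notMem_hull (hα : ∀ i, 0 ≤ α i) (ha : 0 < a)
    (hρ : ρ ∉ PointedCone.hull ℝ (range r)) (hint : ¬ IsIntPt (f + a⁻¹ • ρ)) :
    ¬ IsT1 (convexHull ℝ (range fun i : Fin (k + 1) =>
      f + ((Fin.snoc α a : Fin (k + 1) → ℝ) i)⁻¹ • (Fin.snoc r ρ : Fin (k + 1) → Pt) i)) := by
  have hrange : (range fun i : Fin (k + 1) =>
      f + ((Fin.snoc α a : Fin (k + 1) → ℝ) i)⁻¹ • (Fin.snoc r ρ : Fin (k + 1) → Pt) i) =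
      insert (f + a⁻¹ • ρ) (range fun i => f + (α i)⁻¹ • r i) := by
    rw [← Fin.range_snoc]
    exact congrArg range (funext (Fin.forall_fin_succ'.2 (by simp)))
  rw [hrange]
  refine fun hT1 => hint (hT1.isIntPt_of_mem_extremePoints
    (mem_extremePoints_convexHull_insert fun hmem => hρ ?_))
  have hmem' := sub_mem_hull_of_mem_convexHull hα hmem
  rw [add_sub_cancel_left] at hmem'
  simpa [smul_inv_smul₀ ha.ne'] using
    (PointedCone.hull ℝ (range r)).smul_mem ha.le hmem'

/-- The new ray is taken in the interior of the negative of the cone over a basis contained in the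
given rays. -/
lemma exists_isPrimitive_hull_eq_top (hspan : Submodule.span ℝ (range r) = ⊤)
    (hf : ¬ IsIntPt f) (hnotfull : PointedCone.hull ℝ (range r) ≠ ⊤) :
    ∃ ρ, IsPrimitive ρ ∧ (∀ m : ℤ, detForm ρ f ≠ m) ∧ ρ ∉ PointedCone.hull ℝ (range r) ∧
      PointedCone.hull ℝ (insert ρ (range r)) = ⊤ := by
  let b := Module.Basis.ofSpan hspan.ge
  have hb (i) : b i ∈ range r := Module.Basis.ofSpan_subset hspan.ge (mem_range_self i)
  have hfin := Module.Finite.finite_basis b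
  have hopen : IsOpen {x : Pt | ∀ i, b.repr x i < 0} := by
    simp only [ofPred_forall]
    exact isOpen_iInter_of_finite fun i => isOpen_lt
      (b.coord i).continuous_of_finiteDimensional continuous_const
  obtain ⟨ρ, hneg, hprim, hlevel⟩ := exists_isPrimitive_mem_forall_detForm_ne hopen
    ⟨b.equivFun.symm (-1), fun i => by simp⟩
    (fun x hx c hc i => by simpa using mul_neg_of_pos_of_neg hc (hx i)) hf
  refine ⟨ρ, hprim, hlevel, fun hmem => hnotfull ?_, ?_⟩
  · exact pointedCone_eq_top_of_repr_neg b (fun i => PointedCone.subset_hull (hb i)) hmem hneg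
  · exact pointedCone_eq_top_of_repr_neg b
      (fun i => PointedCone.subset_hull (mem_insert_of_mem _ (hb i)))
      (PointedCone.subset_hull (mem_insert _ _)) hneg

lemma exists_isFacet_snoc (hk : 2 ≤ k) (hr : ∀ i, IsRatPt (r i)) (hρ : IsPrimitive ρ)
    (hα : ∀ i, 0 < α i) (hfacet : IsFacet k r f α 1)
    (hnotsplit : ¬ ∃ T : Set Pt, IsSplitSet T ∧ inducedSet k r f α ⊆ T) :
    ∃ a, 0 < a ∧ IsFacet (k + 1) (Fin.snoc r ρ) f (Fin.snoc α a) 1 := by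
  obtain ⟨s, t, hs, ht, hcost, hint⟩ :=
    hρ.exists_isIntPt_of_not_split (fun i => (hα i).le) hnotsplit
  obtain ⟨a, ha, hvalid, p, hp, hlast, htight⟩ := exists_lifting (k := k + 1)
    (r := Fin.snoc r ρ) (f := f) (β := Fin.snoc α 0) (j := Fin.last k) (by simpa using hρ.isIntPt)
    (Fin.forall_fin_succ'.2 (by simpa using fun i => (hα i).le))
    (Fin.forall_fin_succ'.2 (by simpa [Fin.castSucc_ne_last] using fun i => (hα i).ne'))
    (fun p hp => hfacet.1.of_last_eq_zero hp)
    ⟨(_, Fin.snoc s t), ⟨hint, Fin.forall_fin_succ'.2 (by simpa using ⟨hs, ht.le⟩),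
      by simp [Fin.sum_univ_castSucc, add_assoc]⟩, by simpa [Fin.sum_univ_castSucc] using hcost⟩
  rw [Fin.update_snoc_last] at hvalid htight
  exact ⟨a, ha, hfacet.snoc hk hr hρ.isIntPt.isRatPt ha hvalid hp hlast htight⟩

end Extension

theorem extend_to_full_dimensional_cone_general (k : ℕ) (r : Fin k → Pt) (f : Pt)
    (hr_rat : ∀ i, IsRatPt (r i)) (hr_ne : ∀ i, r i ≠ 0) (hf_int : ¬ IsIntPt f)
    (α : Fin k → ℝ) (hα : ∀ i, 0 ≤ α i)
    (hfacet : IsFacet k r f α 1)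
    (hnotsplit : ¬ ∃ T : Set Pt, IsSplitSet T ∧ inducedSet k r f α ⊆ T)
    (hdim : Module.finrank ℝ (Submodule.span ℝ (Set.range r)) = 2)
    (hnotfull : coneGen (Set.range r) ≠ Set.univ) :
    ∃ (rnew : Pt) (anew : ℝ), IsRatPt rnew ∧ rnew ≠ 0 ∧ 0 < anew ∧
      coneGen (Set.range (Fin.snoc r rnew : Fin (k + 1) → Pt)) = Set.univ ∧
      IsFacet (k + 1) (Fin.snoc r rnew) f (Fin.snoc α anew) 1 ∧
      ¬ IsT1 (convexHull ℝ (Set.range fun i : Fin (k + 1) =>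
          f + ((Fin.snoc α anew : Fin (k + 1) → ℝ) i)⁻¹ •
            (Fin.snoc r rnew : Fin (k + 1) → Pt) i)) := by
  rw [coneGen_eq_hull, ne_eq, Submodule.coe_eq_univ] at hnotfull
  have hspan : Submodule.span ℝ (range r) = ⊤ := Submodule.eq_top_of_finrank_eq (by simp [hdim])
  have hk : 2 ≤ k := hdim ▸ (finrank_range_le_card r).trans_eq (Fintype.card_fin k)
  have hαpos := coeff_pos_of_not_split hr_rat hr_ne hα hfacet.1 hnotsplit
  obtain ⟨ρ, hρ, hlevel, hρr, htop⟩ := exists_isPrimitive_hull_eq_top hspan hf_int hnotfull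
  obtain ⟨a, ha, hfacet'⟩ := exists_isFacet_snoc hk hr_rat hρ hαpos hfacet hnotsplit
  have hvertex : ¬ IsIntPt (f + a⁻¹ • ρ) := fun hint => by
    obtain ⟨m, hm⟩ := hρ.isIntPt.exists_detForm_eq_intCast hint
    exact hlevel m (by simpa [detForm_self] using hm)
  refine ⟨ρ, a, hρ.isIntPt.isRatPt, hρ.ne_zero, ha, ?_, hfacet',
    not_isT1_of_notMem_hull hα ha hρr hvertex⟩
  rw [coneGen_eq_hull, Fin.range_snoc, htop, Submodule.top_coe]

theorem extend_to_full_dimensional_cone (k : ℕ)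
    (hk : 1 ≤ k)
    (r : Fin k → Pt) (f : Pt)
    (hr_rat : ∀ i, IsRatPt (r i)) (hr_ne : ∀ i, r i ≠ 0)
    (hf_rat : IsRatPt f) (hf_int : ¬ IsIntPt f)
    (hne : (mixedP k r f).Nonempty)
    (α : Fin k → ℝ) (hα : ∀ i, 0 ≤ α i)
    (hfacet : IsFacet k r f α 1)
    (hnotsplit : ¬ ∃ T : Set Pt, IsSplitSet T ∧ inducedSet k r f α ⊆ T)
    (hdim : Module.finrank ℝ (Submodule.span ℝ (Set.range r)) = 2)
    (hnotfull : coneGen (Set.range r) ≠ Set.univ) :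
    ∃ (rnew : Pt) (anew : ℝ), IsRatPt rnew ∧ rnew ≠ 0 ∧ 0 < anew ∧
      coneGen (Set.range (Fin.snoc r rnew : Fin (k + 1) → Pt)) = Set.univ ∧
      IsFacet (k + 1) (Fin.snoc r rnew) f (Fin.snoc α anew) 1 ∧
      ¬ IsT1 (convexHull ℝ (Set.range fun i : Fin (k + 1) =>
          f + ((Fin.snoc α anew : Fin (k + 1) → ℝ) i)⁻¹ •
            (Fin.snoc r rnew : Fin (k + 1) → Pt) i)) := by
  exact extend_to_full_dimensional_cone_general k r f hr_rat hr_ne hf_int α hα hfacet hnotsplit hdim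
    hnotfull
end

section
/- (General Lifting.) Let ∑_{i=1}^k αᵢ sᵢ ≥ γ with α ∈ ℝ^k, α ≥ 0, be a valid inequality for conv(P(R,f)) of split rank η with respect to P(R,f)⁰, and let r^{k+1} ∈ ℚ² ∖ {0}. Then there exists α_{k+1} ≥ 0 such that ∑_{i=1}^k αᵢ sᵢ + α_{k+1} s_{k+1} ≥ γ is a valid inequality for conv(P([R r^{k+1}],f)) and has split rank at most η with respect to P([R r^{k+1}],f)⁰. -/
open Set Pointwise

/-!
A set `P ⊆ ℝⁿ` is studied through the cone in `ℝ × ℝⁿ` over it, of which `P` is the slice at height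
one. A split then cuts the cone by two linear halfspaces and adds up the two pieces. On the finitely
many integral generators of a rational cone a split only depends on the positive parts of two
integral functionals, so by Dickson's lemma finitely many splits determine the split closure, which
is therefore the slice of a rational cone again.

Lifting rests on one fact: a linear form that is nonnegative on the face `m = 0` of a finitely
generated cone becomes nonnegative on the whole cone after adding a large multiple of `m`. For the
rank, `m` is the new coordinate `s_{k+1}` on the cone over the `η`-th split closure, whose face
`s_{k+1} = 0` projects into the `η`-th closure of the smaller problem. For validity, the cones are
those over the fibres of the larger problem above the integer points `x`; reducing each `sᵢ` modulo
an integer multiple of the denominators of `rⁱ` shows that finitely many `x` are enough.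
-/

open Module PointedCone Filter

theorem nonpos_of_posPart_le_posPart {α : Type*} [AddCommGroup α] [LinearOrder α]
    {a b : α} (h : a⁺ ≤ b⁺) (hba : b < a) : a ≤ 0 := by
  by_contra! ha
  exact (max_lt hba ha).not_ge ((le_posPart a).trans h)

theorem exists_finset_forall_exists_le {σ β : Type*} [PartialOrder β] [WellQuasiOrderedLE β]
    (g : σ → β) : ∃ T : Finset σ, ∀ i, ∃ j ∈ T, g j ≤ g i := by
  classical
  have hfin : {b | Minimal (· ∈ range g) b}.Finite :=
    WellQuasiOrderedLE.finite_of_isAntichain (setOfPred_minimal_antichain _)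
  obtain ⟨T, -, hT⟩ := Finset.subset_set_image_iff.1
    (hfin.coe_toFinset.trans_subset fun b hb ↦ image_univ.symm ▸ hb.1)
  refine ⟨T, fun i ↦ ?_⟩
  obtain ⟨b, hbi, hb⟩ := exists_minimal_le_of_wellFoundedLT (· ∈ range g) (g i) ⟨i, rfl⟩
  obtain ⟨j, hj, rfl⟩ := Finset.mem_image.1 (hT ▸ hfin.mem_toFinset.2 hb)
  exact ⟨j, hj, hbi⟩

section Lattices

variable {K E : Type*} [CommRing K] [AddCommGroup E] [Module K E] {L : AddSubgroup E}

/-- The functional `φ` takes integer values on the lattice `L`. -/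
def IsIntegralOn (L : AddSubgroup E) (φ : Dual K E) : Prop :=
  ∀ x ∈ L, ∃ z : ℤ, φ x = z

theorem IsIntegralOn.add {φ ψ : Dual K E} (hφ : IsIntegralOn L φ) (hψ : IsIntegralOn L ψ) :
    IsIntegralOn L (φ + ψ) := fun x hx ↦ by
  obtain ⟨m, hm⟩ := hφ x hx
  obtain ⟨n, hn⟩ := hψ x hx
  exact ⟨m + n, by simp [hm, hn]⟩

theorem IsIntegralOn.neg {φ : Dual K E} (hφ : IsIntegralOn L φ) : IsIntegralOn L (-φ) :=
  fun x hx ↦ by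
  obtain ⟨m, hm⟩ := hφ x hx
  exact ⟨-m, by simp [hm]⟩

theorem IsIntegralOn.sub {φ ψ : Dual K E} (hφ : IsIntegralOn L φ) (hψ : IsIntegralOn L ψ) :
    IsIntegralOn L (φ - ψ) :=
  sub_eq_add_neg φ ψ ▸ hφ.add hψ.neg

/-- Finitely many functionals that are integral on `L` separate the points of the whole space;
for `L = ℤⁿ ⊆ ℝⁿ` these are the coordinates. -/
def HasIntegralCoordinates (K : Type*) {E : Type*} [CommRing K] [AddCommGroup E] [Module K E]
    (L : AddSubgroup E) : Prop :=
  ∃ Φ : Set (Dual K E), Φ.Finite ∧ (∀ φ ∈ Φ, IsIntegralOn L φ) ∧ ∀ x, (∀ φ ∈ Φ, φ x = 0) → x = 0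

end Lattices

section Cones

variable {K E : Type*} [Field K] [LinearOrder K] [IsStrictOrderedRing K]
  [AddCommGroup E] [Module K E]

/-- The closed linear halfspace `{x | φ x ≤ 0}`, as a cone. -/
def halfspace (φ : Dual K E) : PointedCone K E :=
  (positive K K).comap (-φ)

@[simp]
theorem mem_halfspace {φ : Dual K E} {x : E} : x ∈ halfspace φ ↔ φ x ≤ 0 := by
  simp [halfspace]

theorem nonpos_of_mem_hull {s : Set E} {φ : Dual K E} (hs : ∀ x ∈ s, φ x ≤ 0) {x : E}
    (hx : x ∈ hull K s) : φ x ≤ 0 :=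
  mem_halfspace.1 (Submodule.span_le.2 (fun y hy ↦ mem_halfspace.2 (hs y hy)) hx)

theorem nonneg_of_mem_hull {s : Set E} {φ : Dual K E} (hs : ∀ x ∈ s, 0 ≤ φ x) {x : E}
    (hx : x ∈ hull K s) : 0 ≤ φ x := by
  simpa using nonpos_of_mem_hull (φ := -φ) (by simpa using hs) hx

theorem eq_zero_of_mem_hull_of_apply_eq_zero {s : Set E} {φ : Dual K E} (hs : ∀ x ∈ s, 0 < φ x)
    {x : E} (hx : x ∈ hull K s) (hφx : φ x = 0) : x = 0 := by
  have hnonneg {y : E} (hy : y ∈ hull K s) : 0 ≤ φ y :=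
    nonneg_of_mem_hull (fun z hz ↦ (hs z hz).le) hy
  induction hx using Submodule.span_induction with
  | mem x hx => exact absurd hφx (hs x hx).ne'
  | zero => rfl
  | add x y hx hy ihx ihy =>
    rw [map_add, add_eq_zero_iff_of_nonneg (hnonneg hx) (hnonneg hy)] at hφx
    rw [ihx hφx.1, ihy hφx.2, add_zero]
  | smul c x _ ihx =>
    obtain rfl | hφx : c = 0 ∨ φ x = 0 := by simpa using hφx
    · exact zero_smul _ x
    · rw [ihx hφx, smul_zero]

theorem sub_mem_of_mem_hull {s t : Set E} {C : PointedCone K E} (φ : Dual K E)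
    (hC : ∀ x ∈ s, ∀ y ∈ t, φ y • x - φ x • y ∈ C) {x y : E} (hx : x ∈ hull K s)
    (hy : y ∈ hull K t) : φ y • x - φ x • y ∈ C := by
  induction hx, hy using Submodule.span_induction₂ with
  | mem_mem x y hx hy => exact hC x hx y hy
  | zero_left | zero_right => simp
  | add_left x₁ x₂ y _ _ _ h₁ h₂ =>
    convert C.add_mem h₁ h₂ using 1
    simp only [map_add]
    module
  | add_right x y₁ y₂ _ _ _ h₁ h₂ =>
    convert C.add_mem h₁ h₂ using 1
    simp only [map_add]
    module
  | smul_left c x y _ _ h =>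
    convert Submodule.smul_mem C c h using 1
    obtain ⟨c, hc⟩ := c
    simp only [Nonneg.mk_smul, map_smul, smul_eq_mul]
    module
  | smul_right c x y _ _ h =>
    convert Submodule.smul_mem C c h using 1
    obtain ⟨c, hc⟩ := c
    simp only [Nonneg.mk_smul, map_smul, smul_eq_mul]
    module

/-- The generators of `hull K s ⊓ halfspace φ` produced by one step of the double description
method: those of `s` inside the halfspace, and for every generator inside and every generator
outside the combination of the two on which `φ` vanishes. -/
def cutGenerators (s : Set E) (φ : Dual K E) : Set E :=
  {x ∈ s | φ x ≤ 0} ∪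
    image2 (fun x y ↦ φ y • x - φ x • y) {x ∈ s | φ x ≤ 0} {y ∈ s | 0 < φ y}

theorem hull_cutGenerators (s : Set E) (φ : Dual K E) :
    hull K (cutGenerators s φ) = hull K s ⊓ halfspace φ := by
  apply le_antisymm
  · refine Submodule.span_le.2 (union_subset
      (fun x hx ↦ ⟨subset_hull hx.1, by simpa using hx.2⟩) ?_)
    rintro _ ⟨x, ⟨hxs, hx⟩, y, ⟨hys, hy⟩, rfl⟩
    refine ⟨?_, by simp [mul_comm]⟩
    simp only [SetLike.mem_coe]
    rw [sub_eq_add_neg, ← neg_smul]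
    exact add_mem (PointedCone.smul_mem _ hy.le (subset_hull hxs))
      (PointedCone.smul_mem _ (neg_nonneg.2 hx) (subset_hull hys))
  · rintro z ⟨hz, hφz⟩
    have hs : {x ∈ s | φ x ≤ 0} ∪ {y ∈ s | 0 < φ y} = s := by
      ext x
      simp [← and_or_left, le_or_gt]
    obtain ⟨x, hx, y, hy, rfl⟩ :
        ∃ x ∈ hull K {x ∈ s | φ x ≤ 0}, ∃ y ∈ hull K {y ∈ s | 0 < φ y}, x + y = z := by
      rwa [← Submodule.mem_sup, ← Submodule.span_union, hs]
    have hφx : φ x ≤ 0 := nonpos_of_mem_hull (fun _ h ↦ h.2) hx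
    have hφxy : φ x + φ y ≤ 0 := by simpa using hφz
    have hx' : x ∈ hull K (cutGenerators s φ) := Submodule.span_mono subset_union_left hx
    rcases hφx.lt_or_eq with hφx | hφx
    · have hxy : φ y • x - φ x • y ∈ hull K (cutGenerators s φ) :=
        sub_mem_of_mem_hull φ
          (fun x hx y hy ↦ subset_hull (Or.inr (mem_image2_of_mem hx hy))) hx hy
      rw [← smul_mem_iff _ (neg_pos.2 hφx)]
      convert add_mem hxy (PointedCone.smul_mem _ (neg_nonneg.2 hφxy) hx') using 1
      module
    · have hφy : φ y = 0 := le_antisymm (by simpa [hφx] using hφxy)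
        (nonneg_of_mem_hull (fun _ h ↦ h.2.le) hy)
      rwa [eq_zero_of_mem_hull_of_apply_eq_zero (fun _ h ↦ h.2) hy hφy, add_zero]

variable {F : Type*} [AddCommGroup F] [Module K F] {L : AddSubgroup E} {C D : PointedCone K E}

/-- `C` is generated by finitely many vectors of `L`; for `L = ℤⁿ ⊆ ℝⁿ` these are the rational
polyhedral cones. -/
def IsLatticeCone (L : AddSubgroup E) (C : PointedCone K E) : Prop :=
  ∃ s : Set E, s.Finite ∧ s ⊆ L ∧ hull K s = C

theorem IsLatticeCone.fg (hC : IsLatticeCone L C) : C.FG := by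
  obtain ⟨s, hs, -, rfl⟩ := hC
  exact Submodule.fg_def.2 ⟨s, hs, rfl⟩

theorem isLatticeCone_hull_of_smul_mem {s : Set E} (hs : s.Finite)
    (hsL : ∀ x ∈ s, ∃ c : K, 0 < c ∧ c • x ∈ L) : IsLatticeCone L (hull K s) := by
  choose! c hc hcL using hsL
  refine ⟨(fun x ↦ c x • x) '' s, hs.image _, image_subset_iff.2 hcL,
    le_antisymm (Submodule.span_le.2 ?_) (Submodule.span_le.2 fun x hx ↦ ?_)⟩
  · rintro _ ⟨x, hx, rfl⟩
    exact PointedCone.smul_mem _ (hc x hx).le (subset_hull hx)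
  · exact (smul_mem_iff _ (hc x hx)).1 (subset_hull (mem_image_of_mem _ hx))

namespace IsLatticeCone

theorem sup (hC : IsLatticeCone L C) (hD : IsLatticeCone L D) : IsLatticeCone L (C ⊔ D) := by
  obtain ⟨s, hs, hsL, rfl⟩ := hC
  obtain ⟨t, ht, htL, rfl⟩ := hD
  exact ⟨s ∪ t, hs.union ht, union_subset hsL htL, Submodule.span_union s t⟩

theorem inf_halfspace (hC : IsLatticeCone L C) {φ : Dual K E} (hφ : IsIntegralOn L φ) :
    IsLatticeCone L (C ⊓ halfspace φ) := by
  obtain ⟨s, hs, hsL, rfl⟩ := hC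
  refine ⟨cutGenerators s φ, (hs.sep _).union ((hs.sep _).image2 _ (hs.sep _)),
    union_subset ((sep_subset _ _).trans hsL) ?_, hull_cutGenerators s φ⟩
  rintro _ ⟨x, ⟨hx, -⟩, y, ⟨hy, -⟩, rfl⟩
  obtain ⟨m, hm⟩ := hφ x (hsL hx)
  obtain ⟨n, hn⟩ := hφ y (hsL hy)
  simp only [hm, hn, Int.cast_smul_eq_zsmul]
  exact sub_mem (zsmul_mem (hsL hx) n) (zsmul_mem (hsL hy) m)

theorem inf_zeroLocus (hC : IsLatticeCone L C) {Φ : Set (Dual K E)} (hΦ : Φ.Finite)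
    (hΦL : ∀ φ ∈ Φ, IsIntegralOn L φ) :
    ∃ D : PointedCone K E, IsLatticeCone L D ∧ ∀ x, x ∈ D ↔ x ∈ C ∧ ∀ φ ∈ Φ, φ x = 0 := by
  induction Φ, hΦ using Set.Finite.induction_on with
  | empty => exact ⟨C, hC, by simp⟩
  | @insert φ Φ _ _ ih =>
    obtain ⟨D, hD, hDΦ⟩ := ih fun ψ hψ ↦ hΦL ψ (mem_insert_of_mem φ hψ)
    have hφ := hΦL φ (mem_insert φ Φ)
    refine ⟨D ⊓ halfspace φ ⊓ halfspace (-φ), (hD.inf_halfspace hφ).inf_halfspace hφ.neg,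
      fun x ↦ ?_⟩
    simp only [Submodule.mem_inf, hDΦ, mem_halfspace, LinearMap.neg_apply, neg_nonpos,
      forall_mem_insert, le_antisymm_iff (a := φ x)]
    tauto

theorem map {M : AddSubgroup F} (g : E →ₗ[K] F) (hg : ∀ x ∈ L, g x ∈ M)
    (hC : IsLatticeCone L C) : IsLatticeCone M (C.map g) := by
  obtain ⟨s, hs, hsL, rfl⟩ := hC
  refine ⟨g '' s, hs.image g, image_subset_iff.2 fun x hx ↦ hg x (hsL hx), ?_⟩
  exact (Submodule.map_span (g.restrictScalars {c : K // 0 ≤ c}) s).symm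

theorem prod {M : AddSubgroup F} {D : PointedCone K F} (hC : IsLatticeCone L C)
    (hD : IsLatticeCone M D) : IsLatticeCone (L.prod M) (C.prod D) := by
  obtain ⟨s, hs, hsL, rfl⟩ := hC
  obtain ⟨t, ht, htM, rfl⟩ := hD
  refine ⟨insert 0 s ×ˢ insert 0 t, (hs.insert 0).prod (ht.insert 0), ?_, ?_⟩
  · exact prod_mono (insert_subset L.zero_mem hsL) (insert_subset M.zero_mem htM)
  · rw [hull, Submodule.span_prod_eq _ (mem_insert 0 s) (mem_insert 0 t),
      Submodule.span_insert_zero, Submodule.span_insert_zero]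

end IsLatticeCone

theorem HasIntegralCoordinates.isLatticeCone_inf (hL : HasIntegralCoordinates K L)
    (hC : IsLatticeCone L C) (hD : IsLatticeCone L D) : IsLatticeCone L (C ⊓ D) := by
  obtain ⟨Φ, hΦ, hΦL, hsep⟩ := hL
  let δ : E × E →ₗ[K] E := LinearMap.fst K E E - LinearMap.snd K E E
  obtain ⟨B, hB, hBmem⟩ := (hC.prod hD).inf_zeroLocus (hΦ.image (· ∘ₗ δ)) <| by
    rintro _ ⟨φ, hφ, rfl⟩ p ⟨hp₁, hp₂⟩
    exact hΦL φ hφ _ (sub_mem hp₁ hp₂)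
  convert hB.map (M := L) (LinearMap.fst K E E) fun p hp ↦ (AddSubgroup.mem_prod.1 hp).1
  ext x
  have hdiag (p : E × E) : p ∈ B ↔ p ∈ C.prod D ∧ p.1 = p.2 := by
    rw [hBmem, forall_mem_image, ← sub_eq_zero]
    exact and_congr_right fun _ ↦ ⟨hsep _, fun h φ _ ↦ by
      rw [LinearMap.comp_apply, show δ p = 0 from h, map_zero]⟩
  constructor
  · rintro ⟨hxC, hxD⟩
    exact ⟨(x, x), (hdiag _).2 ⟨⟨hxC, hxD⟩, rfl⟩, rfl⟩
  · rintro ⟨⟨x, y⟩, hxy, rfl⟩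
    obtain ⟨hxy, rfl⟩ : _ ∧ x = y := (hdiag _).1 hxy
    exact hxy

/-- The homogenization of one step of the split closure. When `e` is the height functional,
`φ = π · x - π₀ e` and `C` is the cone over a convex set, the two pieces are the cones over the
parts of that set where `π · x ≤ π₀` and `π · x ≥ π₀ + 1`. -/
def splitCone (C : PointedCone K E) (e φ : Dual K E) : PointedCone K E :=
  (C ⊓ halfspace φ) ⊔ (C ⊓ halfspace (e - φ))

theorem splitCone_le (C : PointedCone K E) (e φ : Dual K E) : splitCone C e φ ≤ C :=
  sup_le inf_le_left inf_le_left

theorem splitCone_sub (C : PointedCone K E) (e φ : Dual K E) :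
    splitCone C e (e - φ) = splitCone C e φ := by
  rw [splitCone, splitCone, sub_sub_cancel, sup_comm]

theorem IsLatticeCone.split (hC : IsLatticeCone L C) {e φ : Dual K E}
    (he : IsIntegralOn L e) (hφ : IsIntegralOn L φ) : IsLatticeCone L (splitCone C e φ) :=
  (hC.inf_halfspace hφ).sup (hC.inf_halfspace (he.sub hφ))

theorem hull_inf_halfspace_le_splitCone {s : Set E} {e φ ψ : Dual K E}
    (h : ∀ x ∈ s, φ x ≤ ψ x ∨ 0 ≤ ψ x ∧ e x ≤ φ x) :
    hull K s ⊓ halfspace ψ ≤ splitCone (hull K s) e φ := by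
  rintro z ⟨hz, hψz⟩
  have hs : s = {x ∈ s | φ x ≤ ψ x} ∪ {x ∈ s | 0 ≤ ψ x ∧ e x ≤ φ x} := by
    rw [← sep_or, sep_eq_self_iff_mem_true.2 h]
  obtain ⟨x, hx, y, hy, rfl⟩ : ∃ x ∈ hull K {x ∈ s | φ x ≤ ψ x},
      ∃ y ∈ hull K {x ∈ s | 0 ≤ ψ x ∧ e x ≤ φ x}, x + y = z := by
    rwa [← Submodule.mem_sup, ← Submodule.span_union, ← hs]
  have hφx : (φ - ψ) x ≤ 0 := nonpos_of_mem_hull (fun u hu ↦ sub_nonpos.2 hu.2) hx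
  have hψy : 0 ≤ ψ y := nonneg_of_mem_hull (fun u hu ↦ hu.2.1) hy
  have hey : (e - φ) y ≤ 0 := nonpos_of_mem_hull (fun u hu ↦ sub_nonpos.2 hu.2.2) hy
  have hψxy : ψ x + ψ y ≤ 0 := by simpa using hψz
  rw [LinearMap.sub_apply] at hφx
  exact Submodule.add_mem_sup
    ⟨Submodule.span_mono (sep_subset _ _) hx, mem_halfspace.2 (by linarith)⟩
    ⟨Submodule.span_mono (sep_subset _ _) hy, mem_halfspace.2 hey⟩

theorem splitCone_hull_le_splitCone_hull {s : Set E} {e φ ψ : Dual K E} (he : ∀ x ∈ s, 0 ≤ e x)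
    (h : ∀ x ∈ s, (ψ x)⁺ ≤ (φ x)⁺ ∧ (e x - ψ x)⁺ ≤ (e x - φ x)⁺) :
    splitCone (hull K s) e ψ ≤ splitCone (hull K s) e φ := by
  refine sup_le (hull_inf_halfspace_le_splitCone fun x hx ↦ or_iff_not_imp_left.2 fun hlt ↦ ?_) ?_
  · have := nonpos_of_posPart_le_posPart (h x hx).2 (by linarith)
    constructor <;> linarith [he x hx]
  · rw [← splitCone_sub _ e φ]
    refine hull_inf_halfspace_le_splitCone fun x hx ↦ or_iff_not_imp_left.2 fun hlt ↦ ?_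
    simp only [LinearMap.sub_apply] at hlt ⊢
    have := nonpos_of_posPart_le_posPart (h x hx).1 (by linarith)
    constructor <;> linarith [he x hx]

theorem IsIntegralOn.exists_posPart_eq_natCast {φ : Dual K E} (hφ : IsIntegralOn L φ) {x : E}
    (hx : x ∈ L) : ∃ n : ℕ, (φ x)⁺ = n := by
  obtain ⟨z, hz⟩ := hφ x hx
  refine ⟨z.toNat, ?_⟩
  rw [hz, posPart_def, ← Int.cast_natCast, Int.toNat_eq_max, Int.cast_max, Int.cast_zero]

/- On the finitely many generators of `C` the positive parts of `φ` and `e - φ` are natural numbers,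
so by Dickson's lemma the splits of a finite subfamily dominate all the others. -/
theorem IsLatticeCone.exists_finset_forall_splitCone_le {σ : Type*} (hC : IsLatticeCone L C)
    {e : Dual K E} (he : IsIntegralOn L e) (heC : ∀ x ∈ C, 0 ≤ e x) {φ : σ → Dual K E}
    (hφ : ∀ i, IsIntegralOn L (φ i)) :
    ∃ T : Finset σ, ∀ i, ∃ j ∈ T, splitCone C e (φ j) ≤ splitCone C e (φ i) := by
  obtain ⟨s, hs, hsL, rfl⟩ := hC
  have := hs.to_subtype
  choose m hm using fun i (x : s) ↦ (hφ i).exists_posPart_eq_natCast (hsL x.2)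
  choose n hn using fun i (x : s) ↦ (he.sub (hφ i)).exists_posPart_eq_natCast (hsL x.2)
  obtain ⟨T, hT⟩ := exists_finset_forall_exists_le fun i ↦ (m i, n i)
  refine ⟨T, fun i ↦ ?_⟩
  obtain ⟨j, hj, hmji, hnji⟩ := hT i
  refine ⟨j, hj, splitCone_hull_le_splitCone_hull (fun x hx ↦ heC x (subset_hull hx))
    fun x hx ↦ ⟨?_, ?_⟩⟩
  · simpa only [hm _ ⟨x, hx⟩, Nat.cast_le] using hmji ⟨x, hx⟩
  · simpa only [← LinearMap.sub_apply, hn _ ⟨x, hx⟩, Nat.cast_le] using hnji ⟨x, hx⟩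

theorem IsLatticeCone.iInf_splitCone {σ : Type*} [Nonempty σ] (hL : HasIntegralCoordinates K L)
    (hC : IsLatticeCone L C) {e : Dual K E} (he : IsIntegralOn L e) (heC : ∀ x ∈ C, 0 ≤ e x)
    {φ : σ → Dual K E} (hφ : ∀ i, IsIntegralOn L (φ i)) :
    IsLatticeCone L (⨅ i, splitCone C e (φ i)) := by
  obtain ⟨T, hT⟩ := hC.exists_finset_forall_splitCone_le he heC hφ
  obtain ⟨j, hjT, -⟩ := hT (Classical.arbitrary σ)
  have hinf : ⨅ i, splitCone C e (φ i) =
      T.inf' ⟨j, hjT⟩ fun i ↦ splitCone C e (φ i) := by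
    refine le_antisymm (Finset.le_inf' _ _ fun i _ ↦ iInf_le _ i) (le_iInf fun i ↦ ?_)
    obtain ⟨j, hj, hji⟩ := hT i
    exact (Finset.inf'_le _ hj).trans hji
  rw [hinf]
  exact Finset.inf'_induction _ _ (fun _ h _ h' ↦ hL.isLatticeCone_inf h h')
    fun i _ ↦ hC.split he (hφ i)

/- Split closures commute with passing to a face `{x ∈ C | m x = 0}`: if a sum of two points of `C`
lies on the face, then so do the summands. -/
theorem apply_mem_splitCone_of_face {D : PointedCone K F} {e φ : Dual K E} {e' φ' : Dual K F}
    {m : Dual K E} {g : E →ₗ[K] F} (he : ∀ x, e' (g x) = e x) (hφ : ∀ x, φ' (g x) = φ x)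
    (hm : ∀ x ∈ C, 0 ≤ m x) (hg : ∀ x ∈ C, m x = 0 → g x ∈ D) {x : E}
    (hx : x ∈ splitCone C e φ) (hmx : m x = 0) : g x ∈ splitCone D e' φ' := by
  obtain ⟨u, ⟨hu, hφu⟩, v, ⟨hv, hφv⟩, rfl⟩ := Submodule.mem_sup.1 hx
  rw [map_add, add_eq_zero_iff_of_nonneg (hm u hu) (hm v hv)] at hmx
  rw [map_add]
  exact Submodule.add_mem_sup ⟨hg u hu hmx.1, by simpa [hφ] using hφu⟩
    ⟨hg v hv hmx.2, by simpa [he, hφ] using hφv⟩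

theorem eventually_forall_nonneg_add_mul (hC : C.FG) {l m : Dual K E} (hm : ∀ x ∈ C, 0 ≤ m x)
    (hl : ∀ x ∈ C, m x = 0 → 0 ≤ l x) : ∀ᶠ a in atTop, ∀ x ∈ C, 0 ≤ l x + a * m x := by
  obtain ⟨s, hs, rfl⟩ := Submodule.fg_def.1 hC
  have hgen : ∀ x ∈ s, ∀ᶠ a in atTop, 0 ≤ l x + a * m x := fun x hx ↦ by
    have hxs : x ∈ hull K s := subset_hull hx
    rcases (hm x hxs).eq_or_lt with h | h
    · simp [← h, hl x hxs h.symm]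
    · filter_upwards [eventually_ge_atTop (-l x / m x)] with a ha
      linarith [(div_le_iff₀ h).1 ha]
  filter_upwards [(Filter.eventually_all_finite hs).2 hgen] with a ha x hx
  exact nonneg_of_mem_hull (φ := l + a • m) ha hx

end Cones

section Slices

variable {K V : Type*} [Field K] [LinearOrder K] [IsStrictOrderedRing K]
  [AddCommGroup V] [Module K V]

/-- The convex set over which `C` is a cone: its section at height one. -/
def slice (C : PointedCone K (K × V)) : Set V := {p | (1, p) ∈ C}

@[simp]
theorem mem_slice {C : PointedCone K (K × V)} {p : V} : p ∈ slice C ↔ (1, p) ∈ C := Iff.rfl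

theorem slice_mono {C D : PointedCone K (K × V)} (h : C ≤ D) : slice C ⊆ slice D :=
  fun _ hp ↦ h hp

theorem convex_slice (C : PointedCone K (K × V)) : Convex K (slice C) := by
  intro p hp q hq a b ha hb hab
  have : a • ((1 : K), p) + b • ((1 : K), q) ∈ C :=
    add_mem (PointedCone.smul_mem _ ha hp) (PointedCone.smul_mem _ hb hq)
  simpa [hab] using this

theorem slice_iInf {ι : Sort*} (C : ι → PointedCone K (K × V)) :
    slice (⨅ i, C i) = ⋂ i, slice (C i) := by
  ext p
  simp [Submodule.mem_iInf]

theorem inv_smul_mem_slice {C : PointedCone K (K × V)} {v : K × V} (hv : v ∈ C) (h : 0 < v.1) :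
    v.1⁻¹ • v.2 ∈ slice C := by
  simpa [Prod.smul_def, h.ne'] using PointedCone.smul_mem C (inv_nonneg.2 h.le) hv

theorem slice_sup_subset {A B : PointedCone K (K × V)} (hA : ∀ v ∈ A, 0 ≤ v.1)
    (hB : ∀ v ∈ B, 0 ≤ v.1) {S : Set V} (hS : Convex K S) (hAS : slice A ⊆ S) (hBS : slice B ⊆ S)
    (hAB : ∀ p v, (1, p) ∈ A → (0, v) ∈ B → p + v ∈ S)
    (hBA : ∀ p v, (1, p) ∈ B → (0, v) ∈ A → p + v ∈ S) : slice (A ⊔ B) ⊆ S := by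
  intro p hp
  obtain ⟨⟨t, a⟩, ha, ⟨u, b⟩, hb, hab⟩ := Submodule.mem_sup.1 hp
  obtain ⟨htu, rfl⟩ : t + u = 1 ∧ a + b = p := by simpa using hab
  rcases (hA _ ha).eq_or_lt with (rfl : 0 = t) | (ht : 0 < t)
  · obtain rfl : u = 1 := by simpa using htu
    exact add_comm b a ▸ hBA b a hb ha
  rcases (hB _ hb).eq_or_lt with (rfl : 0 = u) | (hu : 0 < u)
  · obtain rfl : t = 1 := by simpa using htu
    exact hAB a b ha hb
  · have := hS (hAS (inv_smul_mem_slice ha ht)) (hBS (inv_smul_mem_slice hb hu)) ht.le hu.le htu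
    simpa [smul_inv_smul₀, ht.ne', hu.ne'] using this

/- A recession direction `v` of one side of the split can be followed from a point `p` of the other
side until it reaches the first side, unless `v` is parallel to the split. -/
theorem add_mem_convexHull_slice {C : PointedCone K (K × V)} {φ : Dual K (K × V)} {p v : V}
    (hp : p ∈ slice (C ⊓ halfspace (LinearMap.fst K K V - φ))) (hv : (0, v) ∈ C ⊓ halfspace φ) :
    p + v ∈ convexHull K (slice (C ⊓ halfspace φ) ∪
      slice (C ⊓ halfspace (LinearMap.fst K K V - φ))) := by
  obtain ⟨hpC, hpφ⟩ := Submodule.mem_inf.1 hp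
  obtain ⟨hvC, hφv⟩ := Submodule.mem_inf.1 hv
  rw [mem_halfspace] at hpφ hφv
  have hadd (c : K) : φ (1, p + c • v) = φ (1, p) + c * φ (0, v) := by
    rw [← smul_eq_mul, ← map_smul, ← map_add]
    simp
  have hC {c : K} (hc : 0 ≤ c) : (1, p + c • v) ∈ C := by
    simpa using C.add_mem hpC (PointedCone.smul_mem C hc hvC)
  rcases hφv.eq_or_lt with hφv | hφv
  · refine subset_convexHull K _ (Or.inr ⟨by simpa using hC zero_le_one, ?_⟩)
    have := hadd 1
    have := hp.2
    simp_all
  · set c := max 1 (φ (1, p) / -φ (0, v))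
    have hc : 0 < c := lt_max_of_lt_left one_pos
    have hfar : p + c • v ∈ slice (C ⊓ halfspace φ) := by
      refine ⟨hC hc.le, ?_⟩
      have : φ (1, p) ≤ c * -φ (0, v) := (div_le_iff₀ (neg_pos.2 hφv)).1 (le_max_right _ _)
      simp only [SetLike.mem_coe, mem_halfspace, hadd]
      linarith
    rw [← inv_smul_smul₀ hc.ne' v]
    exact (convex_convexHull K _).add_smul_mem (subset_convexHull K _ (subset_union_right hp))
      (subset_convexHull K _ (subset_union_left hfar))
      ⟨inv_nonneg.2 hc.le, inv_le_one_of_one_le₀ (le_max_left _ _)⟩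

theorem slice_splitCone {C : PointedCone K (K × V)} (hC : ∀ v ∈ C, 0 ≤ v.1)
    (φ : Dual K (K × V)) :
    slice (splitCone C (LinearMap.fst K K V) φ) =
      convexHull K (slice (C ⊓ halfspace φ) ∪
        slice (C ⊓ halfspace (LinearMap.fst K K V - φ))) := by
  apply Subset.antisymm
  · refine slice_sup_subset (fun v hv ↦ hC v (Submodule.mem_inf.1 hv).1)
      (fun v hv ↦ hC v (Submodule.mem_inf.1 hv).1) (convex_convexHull K _)
      (subset_union_left.trans (subset_convexHull K _))
      (subset_union_right.trans (subset_convexHull K _)) (fun p v hp hv ↦ ?_)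
      fun p v hp hv ↦ add_mem_convexHull_slice hp hv
    rw [union_comm]
    simpa only [sub_sub_cancel] using add_mem_convexHull_slice (φ := LinearMap.fst K K V - φ)
      (by rwa [sub_sub_cancel]) hv
  · exact convexHull_min (union_subset (slice_mono le_sup_left) (slice_mono le_sup_right))
      (convex_slice _)

theorem nonneg_of_forall_mem_slice {C : PointedCone K (K × V)} {l : Dual K (K × V)}
    (hC : ∀ v ∈ C, 0 ≤ v.1) (hl : ∀ p ∈ slice C, 0 ≤ l (1, p))
    (hl₀ : ∀ v, (0, v) ∈ C → 0 ≤ l (0, v)) {v : K × V} (hv : v ∈ C) : 0 ≤ l v := by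
  rcases (hC v hv).eq_or_lt with h | h
  · obtain ⟨t, v⟩ := v
    obtain rfl : 0 = t := h
    exact hl₀ v hv
  · have hlv : v.1 * l (1, v.1⁻¹ • v.2) = l v := by
      rw [← smul_eq_mul, ← map_smul, Prod.smul_mk, smul_inv_smul₀ h.ne', smul_eq_mul, mul_one]
    exact hlv ▸ mul_nonneg h.le (hl _ (inv_smul_mem_slice hv h))

end Slices

section Homogenization

variable {k : ℕ} {r : Fin k → Pt} {f : Pt}

/-- The lattice of integer points of the space `ℝ × ℝ² × ℝᵏ` in which the cones over subsets of
`ℝ² × ℝᵏ` live. -/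
def intLattice (k : ℕ) : AddSubgroup (ℝ × Pt × (Fin k → ℝ)) :=
  (AddSubgroup.zmultiples 1).prod
    ((AddSubgroup.pi univ fun _ ↦ AddSubgroup.zmultiples 1).prod
      (AddSubgroup.pi univ fun _ ↦ AddSubgroup.zmultiples 1))

theorem mem_intLattice {v : ℝ × Pt × (Fin k → ℝ)} :
    v ∈ intLattice k ↔ (∃ z : ℤ, v.1 = z) ∧ IsIntPt v.2.1 ∧ ∀ i, ∃ z : ℤ, v.2.2 i = z := by
  simp only [intLattice, AddSubgroup.mem_prod, AddSubgroup.mem_pi, AddSubgroup.mem_zmultiples_iff,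
    zsmul_one, mem_univ, true_imp_iff, IsIntPt, eq_comm]

theorem isIntegralOn_height : IsIntegralOn (intLattice k) (LinearMap.fst ℝ ℝ (Pt × (Fin k → ℝ))) :=
  fun _ hv ↦ (mem_intLattice.1 hv).1

/-- The homogenization `(t, x, s) ↦ π · x - π₀ t` of the affine functional `π · x - π₀`. -/
def splitForm (k : ℕ) (π : Fin 2 → ℤ) (π₀ : ℤ) : Dual ℝ (ℝ × Pt × (Fin k → ℝ)) :=
  ∑ j, (π j : ℝ) • (LinearMap.proj j ∘ₗ LinearMap.fst ℝ Pt _ ∘ₗ LinearMap.snd ℝ ℝ _) -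
    (π₀ : ℝ) • LinearMap.fst ℝ ℝ _

@[simp]
theorem splitForm_apply (π : Fin 2 → ℤ) (π₀ : ℤ) (v : ℝ × Pt × (Fin k → ℝ)) :
    splitForm k π π₀ v = ∑ j, π j * v.2.1 j - π₀ * v.1 := by
  simp [splitForm]

theorem isIntegralOn_splitForm (π : Fin 2 → ℤ) (π₀ : ℤ) :
    IsIntegralOn (intLattice k) (splitForm k π π₀) := fun v hv ↦ by
  obtain ⟨⟨t, ht⟩, hx, -⟩ := mem_intLattice.1 hv
  choose x hx using hx
  exact ⟨∑ j, π j * x j - π₀ * t, by simp [hx, ht]⟩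

theorem hasIntegralCoordinates_intLattice : HasIntegralCoordinates ℝ (intLattice k) := by
  let x (j : Fin 2) : Dual ℝ (ℝ × Pt × (Fin k → ℝ)) :=
    LinearMap.proj j ∘ₗ LinearMap.fst ℝ Pt _ ∘ₗ LinearMap.snd ℝ ℝ _
  let s (i : Fin k) : Dual ℝ (ℝ × Pt × (Fin k → ℝ)) :=
    LinearMap.proj i ∘ₗ LinearMap.snd ℝ Pt _ ∘ₗ LinearMap.snd ℝ ℝ _
  refine ⟨insert (LinearMap.fst ℝ ℝ _) (range x ∪ range s),
    ((finite_range x).union (finite_range s)).insert _, ?_, fun v hv ↦ ?_⟩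
  · rintro φ (rfl | ⟨j, rfl⟩ | ⟨i, rfl⟩)
    · exact isIntegralOn_height
    · exact fun v hv ↦ (mem_intLattice.1 hv).2.1 j
    · exact fun v hv ↦ (mem_intLattice.1 hv).2.2 i
  · refine Prod.ext (hv _ (mem_insert _ _)) (Prod.ext (funext fun j ↦ ?_) (funext fun i ↦ ?_))
    · exact hv (x j) (Or.inr (Or.inl ⟨j, rfl⟩))
    · exact hv (s i) (Or.inr (Or.inr ⟨i, rfl⟩))

/-- The cone over the linear relaxation `P(R,f)⁰`. -/
def relaxCone (r : Fin k → Pt) (f : Pt) : PointedCone ℝ (ℝ × Pt × (Fin k → ℝ)) :=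
  hull ℝ (insert (1, f, 0) (range fun i ↦ (0, r i, Pi.single i 1)))

theorem mem_relaxCone {v : ℝ × Pt × (Fin k → ℝ)} :
    v ∈ relaxCone r f ↔ 0 ≤ v.1 ∧ (∀ i, 0 ≤ v.2.2 i) ∧ v.2.1 = v.1 • f + ∑ i, v.2.2 i • r i := by
  have hsum (c : Fin k → ℝ) : ∑ i, c i • ((0 : ℝ), r i, (Pi.single i 1 : Fin k → ℝ)) =
      (0, ∑ i, c i • r i, c) := by
    refine Prod.ext ?_ (Prod.ext ?_ ?_)
    · simp [Prod.fst_sum]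
    · simp [Prod.fst_sum, Prod.snd_sum]
    · simp [Prod.snd_sum, ← Pi.single_smul, Finset.univ_sum_single]
  constructor
  · intro hv
    obtain ⟨t, w, hw, rfl⟩ := Submodule.mem_span_insert.1 hv
    obtain ⟨c, hc⟩ := (Submodule.mem_span_range_iff_exists_fun _).1 hw
    obtain rfl := hc.symm.trans (hsum fun i ↦ c i)
    obtain ⟨t, ht⟩ := t
    exact ⟨by simpa [Nonneg.mk_smul] using ht, fun i ↦ by simp [Nonneg.mk_smul, (c i).2],
      by simp [Nonneg.mk_smul]⟩
  · obtain ⟨t, x, s⟩ := v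
    rintro ⟨ht, hs, rfl : x = t • f + ∑ i, s i • r i⟩
    have : ((t, t • f + ∑ i, s i • r i, s) : ℝ × Pt × (Fin k → ℝ)) =
      t • (1, f, 0) + ∑ i, s i • ((0 : ℝ), r i, (Pi.single i 1 : Fin k → ℝ)) := by rw [hsum]; simp
    rw [this]
    exact add_mem (PointedCone.smul_mem _ ht (subset_hull (mem_insert _ _)))
      (sum_mem fun i _ ↦ PointedCone.smul_mem _ (hs i)
        (subset_hull (mem_insert_of_mem _ (mem_range_self i))))

theorem slice_relaxCone : slice (relaxCone r f) = relaxP k r f := by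
  ext p
  simp [mem_relaxCone, relaxP]

theorem IsRatPt.exists_pos_isIntPt_smul {x : Pt} (hx : IsRatPt x) :
    ∃ d : ℕ, 0 < d ∧ IsIntPt ((d : ℝ) • x) := by
  choose q hq using hx
  refine ⟨∏ j, (q j).den, Finset.prod_pos fun j _ ↦ (q j).den_pos, fun j ↦ ?_⟩
  obtain ⟨m, hm⟩ := Finset.dvd_prod_of_mem (fun j ↦ (q j).den) (Finset.mem_univ j)
  refine ⟨m * (q j).num, ?_⟩
  rw [Pi.smul_apply, smul_eq_mul, hm, hq, Int.cast_mul, ← Rat.cast_intCast (q j).num,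
    ← Rat.mul_den_eq_num]
  push_cast
  ring

theorem isLatticeCone_relaxCone (hr : ∀ i, IsRatPt (r i)) (hf : IsRatPt f) :
    IsLatticeCone (intLattice k) (relaxCone r f) := by
  refine isLatticeCone_hull_of_smul_mem ((finite_range _).insert _) ?_
  rintro _ (rfl | ⟨i, rfl⟩)
  · obtain ⟨d, hd, hdf⟩ := hf.exists_pos_isIntPt_smul
    exact ⟨d, Nat.cast_pos.2 hd, mem_intLattice.2 ⟨⟨d, by simp⟩, hdf, fun _ ↦ ⟨0, by simp⟩⟩⟩
  · obtain ⟨d, hd, hdr⟩ := (hr i).exists_pos_isIntPt_smul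
    refine ⟨d, Nat.cast_pos.2 hd, mem_intLattice.2 ⟨⟨0, by simp⟩, hdr, fun j ↦ ?_⟩⟩
    exact ⟨(Pi.single i d : Fin k → ℤ) j, by rcases eq_or_ne j i with rfl | h <;> simp [*]⟩

/-- The cone over the `n`-th split closure of `P(R,f)⁰`. -/
noncomputable def homogClosures (r : Fin k → Pt) (f : Pt) : ℕ → PointedCone ℝ (ℝ × Pt × (Fin k → ℝ))
  | 0 => relaxCone r f
  | n + 1 => ⨅ σ : (Fin 2 → ℤ) × ℤ,
      splitCone (homogClosures r f n) (LinearMap.fst ℝ ℝ _) (splitForm k σ.1 σ.2)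

theorem homogClosures_le_relaxCone (n : ℕ) : homogClosures r f n ≤ relaxCone r f := by
  induction n with
  | zero => exact le_rfl
  | succ n ih => exact (iInf_le _ 0).trans ((splitCone_le _ _ _).trans ih)

theorem isLatticeCone_homogClosures (hr : ∀ i, IsRatPt (r i)) (hf : IsRatPt f) (n : ℕ) :
    IsLatticeCone (intLattice k) (homogClosures r f n) := by
  induction n with
  | zero => exact isLatticeCone_relaxCone hr hf
  | succ n ih =>
    exact ih.iInf_splitCone hasIntegralCoordinates_intLattice isIntegralOn_height
      (fun v hv ↦ (mem_relaxCone.1 (homogClosures_le_relaxCone n hv)).1)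
      fun σ ↦ isIntegralOn_splitForm σ.1 σ.2

theorem closures_eq_slice (n : ℕ) : closures k r f n = slice (homogClosures r f n) := by
  induction n with
  | zero => exact slice_relaxCone.symm
  | succ n ih =>
    rw [homogClosures, iInf_prod, slice_iInf, closures, splitClosure, ih]
    refine iInter_congr fun π ↦ ?_
    rw [slice_iInf]
    refine iInter_congr fun π₀ ↦ ?_
    rw [slice_splitCone fun v hv ↦ (mem_relaxCone.1 (homogClosures_le_relaxCone n hv)).1]
    congr 2 <;> ext p
    · simp
    · simp only [mem_inter_iff, mem_slice, mem_ofPred_eq, Submodule.mem_inf, mem_halfspace,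
        LinearMap.sub_apply, splitForm_apply, LinearMap.fst_apply]
      exact and_congr_right fun _ ↦ by constructor <;> intro <;> linarith

end Homogenization

section Lifting

variable {k : ℕ} {r : Fin k → Pt} {rnew f : Pt} {α : Fin k → ℝ} {γ : ℝ}

/-- The homogenization `(t, x, s) ↦ ∑ αᵢ sᵢ - γ t` of the inequality `∑ αᵢ sᵢ ≥ γ`. -/
def ineqForm (α : Fin k → ℝ) (γ : ℝ) : Dual ℝ (ℝ × Pt × (Fin k → ℝ)) :=
  ∑ i, α i • (LinearMap.proj i ∘ₗ LinearMap.snd ℝ Pt _ ∘ₗ LinearMap.snd ℝ ℝ _) -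
    γ • LinearMap.fst ℝ ℝ _

@[simp]
theorem ineqForm_apply (v : ℝ × Pt × (Fin k → ℝ)) :
    ineqForm α γ v = ∑ i, α i * v.2.2 i - γ * v.1 := by
  simp [ineqForm]

theorem ineqForm_nonneg {D : PointedCone ℝ (ℝ × Pt × (Fin k → ℝ))} (hD : D ≤ relaxCone r f)
    (hα : ∀ i, 0 ≤ α i) (h : ∀ p ∈ slice D, γ ≤ ∑ i, α i * p.2 i)
    {v : ℝ × Pt × (Fin k → ℝ)} (hv : v ∈ D) : 0 ≤ ineqForm α γ v := by
  refine nonneg_of_forall_mem_slice (fun v hv ↦ (mem_relaxCone.1 (hD hv)).1)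
    (fun p hp ↦ by simpa using h p hp) (fun v hv ↦ ?_) hv
  simpa using Finset.sum_nonneg fun i _ ↦ mul_nonneg (hα i) ((mem_relaxCone.1 (hD hv)).2.1 i)

/-- The new coordinate `s_{k+1}`, as a functional. -/
def lastCoord (k : ℕ) : Dual ℝ (ℝ × Pt × (Fin (k + 1) → ℝ)) :=
  LinearMap.proj (Fin.last k) ∘ₗ LinearMap.snd ℝ Pt _ ∘ₗ LinearMap.snd ℝ ℝ _

@[simp]
theorem lastCoord_apply (v : ℝ × Pt × (Fin (k + 1) → ℝ)) : lastCoord k v = v.2.2 (Fin.last k) :=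
  rfl

/-- The projection that forgets the new coordinate `s_{k+1}`. -/
def dropLast (k : ℕ) : ℝ × Pt × (Fin (k + 1) → ℝ) →ₗ[ℝ] ℝ × Pt × (Fin k → ℝ) :=
  LinearMap.id.prodMap (LinearMap.id.prodMap (LinearMap.funLeft ℝ ℝ Fin.castSucc))

@[simp]
theorem dropLast_apply (v : ℝ × Pt × (Fin (k + 1) → ℝ)) :
    dropLast k v = (v.1, v.2.1, fun i ↦ v.2.2 i.castSucc) :=
  rfl

theorem ineqForm_snoc (a : ℝ) (v : ℝ × Pt × (Fin (k + 1) → ℝ)) :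
    ineqForm (Fin.snoc α a) γ v = ineqForm α γ (dropLast k v) + a * lastCoord k v := by
  simp only [ineqForm_apply, Fin.sum_univ_castSucc, Fin.snoc_castSucc, Fin.snoc_last,
    dropLast_apply, lastCoord_apply]
  ring

theorem eventually_forall_mem_slice_snoc {C : PointedCone ℝ (ℝ × Pt × (Fin (k + 1) → ℝ))}
    {D : PointedCone ℝ (ℝ × Pt × (Fin k → ℝ))} (hC : C.FG) (hlast : ∀ v ∈ C, 0 ≤ lastCoord k v)
    (hface : ∀ v ∈ C, lastCoord k v = 0 → dropLast k v ∈ D) (hD : D ≤ relaxCone r f)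
    (hα : ∀ i, 0 ≤ α i) (h : ∀ p ∈ slice D, γ ≤ ∑ i, α i * p.2 i) :
    ∀ᶠ a in atTop, ∀ p ∈ slice C, γ ≤ ∑ i, (Fin.snoc α a : Fin (k + 1) → ℝ) i * p.2 i := by
  filter_upwards [eventually_forall_nonneg_add_mul hC (l := ineqForm α γ ∘ₗ dropLast k) hlast
    fun v hv hv₀ ↦ ineqForm_nonneg hD hα h (hface v hv hv₀)] with a ha p hp
  have := ha _ hp
  rw [LinearMap.comp_apply, ← ineqForm_snoc] at this
  simpa using this

theorem dropLast_mem_relaxCone {v : ℝ × Pt × (Fin (k + 1) → ℝ)}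
    (hv : v ∈ relaxCone (Fin.snoc r rnew) f) (hv₀ : lastCoord k v = 0) :
    dropLast k v ∈ relaxCone r f := by
  obtain ⟨ht, hs, hx⟩ := mem_relaxCone.1 hv
  refine mem_relaxCone.2 ⟨ht, fun i ↦ hs _, ?_⟩
  rw [lastCoord_apply] at hv₀
  simpa [Fin.sum_univ_castSucc, hv₀] using hx

theorem dropLast_mem_homogClosures (n : ℕ) {v : ℝ × Pt × (Fin (k + 1) → ℝ)}
    (hv : v ∈ homogClosures (Fin.snoc r rnew) f n) (hv₀ : lastCoord k v = 0) :
    dropLast k v ∈ homogClosures r f n := by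
  induction n generalizing v with
  | zero => exact dropLast_mem_relaxCone hv hv₀
  | succ n ih =>
    refine Submodule.mem_iInf _ |>.2 fun σ ↦ ?_
    exact apply_mem_splitCone_of_face (fun _ ↦ rfl) (fun _ ↦ by simp)
      (fun x hx ↦ (mem_relaxCone.1 (homogClosures_le_relaxCone n hx)).2.1 _) (fun _ ↦ ih)
      (Submodule.mem_iInf _ |>.1 hv σ) hv₀

theorem isRatPt_snoc (hr : ∀ i, IsRatPt (r i)) (hrnew : IsRatPt rnew) (i : Fin (k + 1)) :
    IsRatPt ((Fin.snoc r rnew : Fin (k + 1) → Pt) i) := by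
  induction i using Fin.lastCases with
  | last => simpa using hrnew
  | cast i => simpa using hr i

theorem exists_splitRank_eq_natCast (h : splitRank k r f α γ ≠ ⊤) :
    ∃ n : ℕ, splitRank k r f α γ = n ∧ ∀ p ∈ closures k r f n, γ ≤ ∑ i, α i * p.2 i := by
  rw [splitRank, Ne, sInf_eq_top] at h
  push Not at h
  obtain ⟨j, hj, -⟩ := h
  exact csInf_mem (nonempty_of_mem hj)

theorem eventually_splitRank_snoc_le (hr : ∀ i, IsRatPt (r i)) (hrnew : IsRatPt rnew)
    (hf : IsRatPt f) (hα : ∀ i, 0 ≤ α i) :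
    ∀ᶠ a in atTop,
      splitRank (k + 1) (Fin.snoc r rnew) f (Fin.snoc α a) γ ≤ splitRank k r f α γ := by
  by_cases htop : splitRank k r f α γ = ⊤
  · simp [htop]
  obtain ⟨n, hn, hvalid⟩ := exists_splitRank_eq_natCast htop
  rw [closures_eq_slice] at hvalid
  filter_upwards [eventually_forall_mem_slice_snoc
    (isLatticeCone_homogClosures (isRatPt_snoc hr hrnew) hf n).fg
    (fun v hv ↦ (mem_relaxCone.1 (homogClosures_le_relaxCone n hv)).2.1 _)
    (fun v ↦ dropLast_mem_homogClosures n) (homogClosures_le_relaxCone n) hα hvalid] with a ha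
  exact hn ▸ sInf_le ⟨n, rfl, closures_eq_slice n ▸ ha⟩

theorem exists_isLatticeCone_fiber (hr : ∀ i, IsRatPt (r i)) (hf : IsRatPt f) (z : Fin 2 → ℤ) :
    ∃ C : PointedCone ℝ _, IsLatticeCone (intLattice k) C ∧
      ∀ v, v ∈ C ↔ v ∈ relaxCone r f ∧ ∀ j, v.2.1 j = z j * v.1 := by
  obtain ⟨C, hC, hCmem⟩ := (isLatticeCone_relaxCone hr hf).inf_zeroLocus
    (finite_range fun j ↦ splitForm k (Pi.single j 1) (z j))
    (forall_mem_range.2 fun _ ↦ isIntegralOn_splitForm _ _)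
  refine ⟨C, hC, fun v ↦ ?_⟩
  rw [hCmem, forall_mem_range]
  simp [Pi.single_apply, sub_eq_zero]

theorem eventually_forall_mem_fiber_snoc (hr : ∀ i, IsRatPt (r i)) (hrnew : IsRatPt rnew)
    (hf : IsRatPt f) (hα : ∀ i, 0 ≤ α i) (h : ValidIneq k r f α γ) (z : Fin 2 → ℤ) :
    ∀ᶠ a in atTop, ∀ p ∈ mixedP (k + 1) (Fin.snoc r rnew) f, (∀ j, p.1 j = z j) →
      γ ≤ ∑ i, (Fin.snoc α a : Fin (k + 1) → ℝ) i * p.2 i := by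
  obtain ⟨C, hC, hCmem⟩ := exists_isLatticeCone_fiber (isRatPt_snoc hr hrnew) hf z
  obtain ⟨D, -, hDmem⟩ := exists_isLatticeCone_fiber hr hf z
  have hvalid : ∀ p ∈ slice D, γ ≤ ∑ i, α i * p.2 i := fun p hp ↦ by
    obtain ⟨hp, hpz⟩ := (hDmem _).1 hp
    obtain ⟨-, hs, hx⟩ := mem_relaxCone.1 hp
    exact h p ⟨fun j ↦ ⟨z j, by simpa using hpz j⟩, hs, by simpa using hx⟩
  filter_upwards [eventually_forall_mem_slice_snoc hC.fg
    (fun v hv ↦ (mem_relaxCone.1 ((hCmem v).1 hv).1).2.1 _)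
    (fun v hv hv₀ ↦ (hDmem _).2 ⟨dropLast_mem_relaxCone ((hCmem v).1 hv).1 hv₀, ((hCmem v).1 hv).2⟩)
    (fun v hv ↦ ((hDmem v).1 hv).1) hα hvalid] with a ha p hp hpz
  exact ha p ((hCmem _).2 ⟨mem_relaxCone.2 ⟨zero_le_one, hp.2.1, by simpa using hp.2.2⟩,
    by simpa using hpz⟩)

theorem finite_setOf_intCast_mem {ι : Type*} [Finite ι] {S : Set (ι → ℝ)} (hS : IsCompact S) :
    {z : ι → ℤ | (fun j ↦ (z j : ℝ)) ∈ S}.Finite :=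
  ((Topology.IsClosedEmbedding.piMap fun _ ↦ Int.isClosedEmbedding_coe_real).isCompact_preimage
    hS).finite_of_discrete

theorem IsIntPt.sub_sum {x : Pt} {y : Fin k → Pt} (hx : IsIntPt x) (hy : ∀ i, IsIntPt (y i))
    (m : Fin k → ℤ) : IsIntPt (x - ∑ i, (m i : ℝ) • y i) := fun j ↦ by
  obtain ⟨a, ha⟩ := hx j
  choose b hb using hy
  exact ⟨a - ∑ i, m i * b i j, by simp [ha, hb]⟩

/- Replacing each `sᵢ` by its residue modulo an integer `dᵢ` with `dᵢ rᵢ` integral preserves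
integrality of `f + ∑ sᵢ rᵢ`, and leaves only a bounded set of values. -/
theorem exists_finite_forall_mem_mixedP_exists_le (hr : ∀ i, IsRatPt (r i)) (f : Pt) :
    ∃ Z : Set (Fin 2 → ℤ), Z.Finite ∧ ∀ p ∈ mixedP k r f,
      ∃ q ∈ mixedP k r f, (∃ z ∈ Z, ∀ j, q.1 j = z j) ∧ q.2 ≤ p.2 := by
  choose d hd hdr using fun i ↦ (hr i).exists_pos_isIntPt_smul
  have hd' (i) : (0 : ℝ) < d i := Nat.cast_pos.2 (hd i)
  let x (s : Fin k → ℝ) : Pt := f + ∑ i, s i • r i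
  refine ⟨{z | (fun j ↦ (z j : ℝ)) ∈ x '' Icc 0 fun i ↦ (d i : ℝ)},
    finite_setOf_intCast_mem (isCompact_Icc.image (by fun_prop)), fun p ⟨hpint, hp, hpx⟩ ↦ ?_⟩
  let m (i : Fin k) : ℤ := toIcoDiv (hd' i) 0 (p.2 i)
  let s (i : Fin k) : ℝ := toIcoMod (hd' i) 0 (p.2 i)
  have hs (i) : s i ∈ Ico 0 (d i : ℝ) := by simpa using toIcoMod_mem_Ico (hd' i) 0 (p.2 i)
  have hsp (i) : s i + m i * d i = p.2 i := by
    rw [← zsmul_eq_mul]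
    exact toIcoMod_add_toIcoDiv_zsmul (hd' i) 0 (p.2 i)
  have hm (i) : 0 ≤ m i := by
    by_contra! h
    have : (m i : ℝ) ≤ -1 := mod_cast Int.le_sub_one_of_lt h
    nlinarith [hp i, (hs i).2, hsp i, hd' i]
  have hint : IsIntPt (x s) := by
    convert hpint.sub_sum hdr m using 1
    simp only [hpx, x, ← hsp, add_smul, mul_smul, Finset.sum_add_distrib]
    abel
  choose z hz using hint
  refine ⟨(x s, s), ⟨fun j ↦ ⟨z j, hz j⟩, fun i ↦ (hs i).1, rfl⟩, ⟨z, ?_, hz⟩, fun i ↦ ?_⟩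
  · exact ⟨s, ⟨fun i ↦ (hs i).1, fun i ↦ (hs i).2.le⟩, funext hz⟩
  · have : (0 : ℝ) ≤ m i * d i := mul_nonneg (Int.cast_nonneg (hm i)) (hd' i).le
    linarith [hsp i]

theorem eventually_validIneq_snoc (hr : ∀ i, IsRatPt (r i)) (hrnew : IsRatPt rnew)
    (hf : IsRatPt f) (hα : ∀ i, 0 ≤ α i) (h : ValidIneq k r f α γ) :
    ∀ᶠ a in atTop, ValidIneq (k + 1) (Fin.snoc r rnew) f (Fin.snoc α a) γ := by
  obtain ⟨Z, hZ, hdom⟩ := exists_finite_forall_mem_mixedP_exists_le (isRatPt_snoc hr hrnew) f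
  filter_upwards [(Filter.eventually_all_finite hZ).2 fun z _ ↦
    eventually_forall_mem_fiber_snoc hr hrnew hf hα h z, eventually_ge_atTop 0] with a ha ha₀ p hp
  obtain ⟨q, hq, ⟨z, hz, hqz⟩, hqp⟩ := hdom p hp
  refine (ha z hz q hq hqz).trans (Finset.sum_le_sum fun i _ ↦ ?_)
  refine mul_le_mul_of_nonneg_left (hqp i) ?_
  induction i using Fin.lastCases with
  | last => simpa using ha₀
  | cast i => simpa using hα i

end Lifting

theorem general_lifting (k : ℕ)
    (hk : 1 ≤ k)
    (r : Fin k → Pt) (f : Pt)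
    (hr_rat : ∀ i, IsRatPt (r i)) (hr_ne : ∀ i, r i ≠ 0)
    (hf_rat : IsRatPt f) (hf_int : ¬ IsIntPt f)
    (hne : (mixedP k r f).Nonempty)
    (rnew : Pt) (hrnew_rat : IsRatPt rnew) (hrnew_ne : rnew ≠ 0)
    (α : Fin k → ℝ) (hα : ∀ i, 0 ≤ α i) (γ : ℝ)
    (hvalid : ValidIneq k r f α γ)
    (η : ℕ∞) (hη : splitRank k r f α γ = η) :
    ∃ anew : ℝ, 0 ≤ anew ∧
      ValidIneq (k + 1) (Fin.snoc r rnew) f (Fin.snoc α anew) γ ∧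
      splitRank (k + 1) (Fin.snoc r rnew) f (Fin.snoc α anew) γ ≤ η := by
  subst hη
  exact ((eventually_ge_atTop 0).and <|
    (eventually_validIneq_snoc hr_rat hrnew_rat hf_rat hα hvalid).and <|
      eventually_splitRank_snoc_le hr_rat hrnew_rat hf_rat hα).exists
end
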